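/- arXiv:math/0703180 — 7 statements merged into one kernel-verified Lean document; each statement's English description precedes it below -/
import Mathlib

section
/- Let F be a field and let f(x_1,...,x_n) = a_1 x_1^k + ... + a_n x_n^k + g(x_1,...,x_n) be a polynomial over F, where k is a positive integer, a_1,...,a_n are nonzero elements of F, and g is a polynomial of total degree less than k. Then for any finite nonempty subsets A_1,...,A_n of F, the value set {f(x_1,...,x_n) : x_1 ∈ A_1, ..., x_n ∈ A_n} has cardinality at least min{p(F), ⌊(|A_1|-1)/k⌋ + ... + ⌊(|A_n|-1)/k⌋ + 1}. -/
/-- `p(F)`: the characteristic of `F` if positive, `+∞` if `F` has characteristic zero,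
as an extended natural number. -/
noncomputable def fieldCharE (F : Type*) [Field F] : ℕ∞ :=
  if ringChar F = 0 then ⊤ else (ringChar F : ℕ∞)

/-!
Suppose that `f` takes all its values on `∏ i, A i` in a finite set `S`, so that the polynomial
`∏ c ∈ S, (f - c)` vanishes on `∏ i, A i`. It has degree at most `k * #S`, and its component of that
degree is `(∑ i, a i * X i ^ k) ^ #S`, whose monomials `∏ i, X i ^ (k * t i)` have coefficient
`multinomial t * ∏ i, a i ^ t i`. If `#S < p(F)` these coefficients do not vanish, and if
`#S ≤ ∑ i, ⌊(#(A i) - 1) / k⌋` one can choose `t` with `k * t i < #(A i)` for all `i`. This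
contradicts the combinatorial Nullstellensatz.
-/

open MvPolynomial Finset
open scoped Nat

section Coefficients

theorem natCast_factorial_ne_zero_of_charP {R : Type*} [Semiring R] [NoZeroDivisors R]
    [Nontrivial R] (p : ℕ) [CharP R p] {d : ℕ} (hd : p = 0 ∨ d < p) : (d ! : R) ≠ 0 := by
  rw [Ne, CharP.cast_eq_zero_iff R p]
  obtain hp | rfl := CharP.char_is_prime_or_zero R p
  · rw [hp.dvd_factorial]
    have := hp.pos
    omega
  · simpa only [zero_dvd_iff] using d.factorial_ne_zero

theorem multinomial_dvd_factorial_degree {σ : Type*} (t : σ →₀ ℕ) :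
    t.multinomial ∣ t.degree ! := by
  rw [Finsupp.multinomial_eq]
  exact Dvd.intro_left _ (Nat.multinomial_spec t.support t)

end Coefficients

section HomogeneousComponent

variable {σ R : Type*} [CommSemiring R]

theorem homogeneousComponent_add_mul_of_totalDegree_le {P Q : MvPolynomial σ R} {m n : ℕ}
    (hP : P.totalDegree ≤ m) (hQ : Q.totalDegree ≤ n) :
    homogeneousComponent (m + n) (P * Q) =
      homogeneousComponent m P * homogeneousComponent n Q := by
  classical
  ext d
  by_cases hd : d.degree = m + n
  · rw [coeff_homogeneousComponent, if_pos hd, coeff_mul, coeff_mul]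
    refine sum_congr rfl fun ⟨u, v⟩ huv ↦ ?_
    have huv : u.degree + v.degree = m + n := by
      rw [← map_add, mem_antidiagonal.mp huv, hd]
    rw [coeff_homogeneousComponent, coeff_homogeneousComponent]
    obtain hu | hu | hu := lt_trichotomy u.degree m
    · have hv : n < v.degree := by omega
      rw [coeff_eq_zero_of_totalDegree_lt (hQ.trans_lt hv), if_neg hu.ne, mul_zero, zero_mul]
    · have hv : v.degree = n := by omega
      rw [if_pos hu, if_pos hv]
    · rw [coeff_eq_zero_of_totalDegree_lt (hP.trans_lt hu), if_neg hu.ne', zero_mul, zero_mul]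
  · rw [coeff_homogeneousComponent, if_neg hd]
    exact (((homogeneousComponent_isHomogeneous m P).mul
      (homogeneousComponent_isHomogeneous n Q)).coeff_eq_zero hd).symm

theorem homogeneousComponent_prod_of_totalDegree_le {ι : Type*} (s : Finset ι)
    (P : ι → MvPolynomial σ R) (n : ι → ℕ) (h : ∀ i ∈ s, (P i).totalDegree ≤ n i) :
    homogeneousComponent (∑ i ∈ s, n i) (∏ i ∈ s, P i) =
      ∏ i ∈ s, homogeneousComponent (n i) (P i) := by
  classical
  induction s using Finset.induction_on with
  | empty => simp
  | insert j s hj ih =>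
    have hs : ∀ i ∈ s, (P i).totalDegree ≤ n i := fun i hi ↦ h i (mem_insert_of_mem hi)
    rw [sum_insert hj, prod_insert hj, prod_insert hj,
      homogeneousComponent_add_mul_of_totalDegree_le (h j (mem_insert_self j s))
        ((totalDegree_finsetProd s P).trans (sum_le_sum hs)), ih hs]

end HomogeneousComponent

theorem homogeneousComponent_prod_sub_C {σ R : Type*} [CommRing R] {f : MvPolynomial σ R} {k : ℕ}
    (hk : 0 < k) (hf : f.totalDegree ≤ k) (S : Finset R) :
    homogeneousComponent (k * #S) (∏ c ∈ S, (f - C c)) = homogeneousComponent k f ^ #S := by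
  have h := homogeneousComponent_prod_of_totalDegree_le S (fun c ↦ f - C c) (fun _ ↦ k)
    fun c _ ↦ (totalDegree_sub_C_le f c).trans hf
  have h_factor (c : R) : homogeneousComponent k (f - C c) = homogeneousComponent k f := by
    rw [map_sub, homogeneousComponent_eq_zero k (C c) (by rwa [totalDegree_C]), sub_zero]
  simpa only [sum_const, smul_eq_mul, mul_comm, h_factor, prod_const] using h

theorem exists_eval_notMem_of_coeff_homogeneousComponent_pow_ne_zero {σ R : Type*} [Finite σ]
    [CommRing R] [IsDomain R] {f : MvPolynomial σ R} {k : ℕ} (hk : 0 < k)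
    (hf : f.totalDegree ≤ k) {S : Finset R} {u : σ →₀ ℕ}
    (hu : coeff u (homogeneousComponent k f ^ #S) ≠ 0)
    {A : σ → Finset R} (huA : ∀ i, u i < #(A i)) :
    ∃ x : σ → R, (∀ i, x i ∈ A i) ∧ eval x f ∉ S := by
  have hu_degree : u.degree = k * #S := by
    by_contra h
    exact hu (((homogeneousComponent_isHomogeneous k f).pow #S).coeff_eq_zero h)
  have h_coeff : coeff u (∏ c ∈ S, (f - C c)) ≠ 0 := by
    rwa [← homogeneousComponent_prod_sub_C hk hf, coeff_homogeneousComponent,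
      if_pos hu_degree] at hu
  have h_degree : (∏ c ∈ S, (f - C c)).totalDegree ≤ u.degree := by
    rw [hu_degree, mul_comm, ← smul_eq_mul, ← sum_const]
    exact (totalDegree_finsetProd _ _).trans
      (sum_le_sum fun c _ ↦ (totalDegree_sub_C_le f c).trans hf)
  obtain ⟨x, hxA, hx⟩ := combinatorial_nullstellensatz_exists_eval_nonzero _ u h_coeff
    (h_degree.antisymm (le_totalDegree (mem_support_iff.mpr h_coeff))) A huA
  refine ⟨x, hxA, fun hxS ↦ hx ?_⟩
  rw [map_prod]
  exact prod_eq_zero hxS (by simp)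

section DiagonalForm

variable {σ R : Type*} [Fintype σ] [CommSemiring R] {k : ℕ} (a : σ → R)

/-- The diagonal form `∑ i, a i * X i ^ k` of degree `k`, the leading form of the polynomials whose
value sets are studied here. -/
noncomputable def diagonalForm (k : ℕ) (a : σ → R) : MvPolynomial σ R :=
  ∑ i, C (a i) * X i ^ k

theorem isHomogeneous_diagonalForm : (diagonalForm k a).IsHomogeneous k :=
  IsHomogeneous.sum _ _ _ fun i _ ↦ isHomogeneous_C_mul_X_pow (a i) i k

theorem totalDegree_diagonalForm_add_le {g : MvPolynomial σ R} (hg : g.totalDegree < k) :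
    (diagonalForm k a + g).totalDegree ≤ k :=
  (totalDegree_add _ _).trans (max_le (isHomogeneous_diagonalForm a).totalDegree_le hg.le)

theorem homogeneousComponent_diagonalForm_add {g : MvPolynomial σ R} (hg : g.totalDegree < k) :
    homogeneousComponent k (diagonalForm k a + g) = diagonalForm k a := by
  rw [map_add, homogeneousComponent_eq_self (isHomogeneous_diagonalForm a),
    homogeneousComponent_eq_zero k g hg, add_zero]

theorem coeff_smul_diagonalForm_pow (hk : k ≠ 0) (t : σ →₀ ℕ) :
    coeff (k • t) (diagonalForm k a ^ t.degree) = t.multinomial * ∏ i, a i ^ t i := by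
  have h_expand : diagonalForm k a = expand k (∑ i, a i • X i) := by
    simp [diagonalForm, smul_eq_C_mul]
  have h_degree : (t.sum fun _ m ↦ m) = t.degree := rfl
  rw [h_expand, ← map_pow, coeff_expand_smul k hk, coeff_linearCombination_X_pow_of_fintype,
    if_pos h_degree, Finsupp.prod_fintype _ _ fun i ↦ pow_zero (a i)]

end DiagonalForm

section ValueSet

variable {σ R : Type*} [Fintype σ] [CommRing R] [IsDomain R] {k : ℕ}

theorem sum_lt_card_of_forall_eval_diagonalForm_add_mem {a : σ → R} (ha : ∀ i, a i ≠ 0)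
    {g : MvPolynomial σ R} (hg : g.totalDegree < k) {A : σ → Finset R}
    (hA : ∀ i, (A i).Nonempty) {S : Finset R}
    (hS : ∀ x : σ → R, (∀ i, x i ∈ A i) → eval x (diagonalForm k a + g) ∈ S)
    (hS_factorial : ((#S)! : R) ≠ 0) :
    ∑ i, (#(A i) - 1) / k < #S := by
  by_contra! hS_card
  have hk : 0 < k := pos_of_gt hg
  obtain ⟨t, ht, ht_degree⟩ : ∃ t : σ →₀ ℕ, (∀ i, t i ≤ (#(A i) - 1) / k) ∧ t.degree = #S :=
    Finsupp.exists_le_degree_eq (Finsupp.equivFunOnFinite.symm fun i ↦ (#(A i) - 1) / k) #S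
      (by simpa [Finsupp.degree_eq_sum] using hS_card)
  have htA (i : σ) : (k • t) i < #(A i) := by
    have : t i * k ≤ #(A i) - 1 := (Nat.le_div_iff_mul_le hk).mp (ht i)
    have := (hA i).card_pos
    rw [Finsupp.smul_apply, smul_eq_mul, mul_comm]
    omega
  have h_multinomial : (t.multinomial : R) ≠ 0 :=
    ne_zero_of_dvd_ne_zero (ht_degree ▸ hS_factorial)
      (Nat.cast_dvd_cast (multinomial_dvd_factorial_degree t))
  have h_coeff : coeff (k • t) (homogeneousComponent k (diagonalForm k a + g) ^ #S) ≠ 0 := by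
    rw [homogeneousComponent_diagonalForm_add a hg, ← ht_degree,
      coeff_smul_diagonalForm_pow a hk.ne']
    exact mul_ne_zero h_multinomial (prod_ne_zero_iff.mpr fun i _ ↦ pow_ne_zero _ (ha i))
  obtain ⟨x, hxA, hxS⟩ := exists_eval_notMem_of_coeff_homogeneousComponent_pow_ne_zero hk
    (totalDegree_diagonalForm_add_le a hg) h_coeff htA
  exact hxS (hS x hxA)

theorem stmt0_general (a : σ → R) (ha : ∀ i, a i ≠ 0) (g f : MvPolynomial σ R)
    (hg : g.totalDegree < k) (hf : f = (∑ i, C (a i) * X i ^ k) + g)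
    (A : σ → Finset R) (hA : ∀ i, (A i).Nonempty) :
    min (if ringChar R = 0 then ⊤ else (ringChar R : ℕ∞))
        (((∑ i, (#(A i) - 1) / k : ℕ) + 1 : ℕ) : ℕ∞)
      ≤ (({y | ∃ x : σ → R, (∀ i, x i ∈ A i) ∧ eval x f = y} : Set R).ncard : ℕ∞) := by
  classical
  set S : Finset R := (Fintype.piFinset A).image fun x ↦ eval x f with hS
  have hS_coe : {y | ∃ x : σ → R, (∀ i, x i ∈ A i) ∧ eval x f = y} = (S : Set R) := by
    ext y
    simp [hS]
  rw [hS_coe, Set.ncard_coe_finset]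
  by_cases h_char : ringChar R = 0 ∨ #S < ringChar R
  · refine min_le_of_right_le (Nat.cast_le.mpr (Nat.succ_le_of_lt ?_))
    refine sum_lt_card_of_forall_eval_diagonalForm_add_mem ha hg hA (fun x hx ↦ ?_)
      (natCast_factorial_ne_zero_of_charP (ringChar R) h_char)
    rw [diagonalForm, ← hf]
    exact mem_image_of_mem _ (Fintype.mem_piFinset.mpr hx)
  · push Not at h_char
    rw [if_neg h_char.1]
    exact min_le_of_left_le (Nat.cast_le.mpr h_char.2)

end ValueSet

theorem stmt0 {F : Type*} [Field F] (n k : ℕ) (hk : 0 < k)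
    (a : Fin n → F) (ha : ∀ i, a i ≠ 0)
    (g f : MvPolynomial (Fin n) F) (hg : g.totalDegree < k)
    (hf : f = (∑ i, MvPolynomial.C (a i) * MvPolynomial.X i ^ k) + g)
    (A : Fin n → Finset F) (hA : ∀ i, (A i).Nonempty) :
    min (fieldCharE F) (((∑ i, ((A i).card - 1) / k : ℕ) + 1 : ℕ))
      ≤ (({y | ∃ x : Fin n → F, (∀ i, x i ∈ A i) ∧ MvPolynomial.eval x f = y} : Set F).ncard : ℕ∞) := by
  exact stmt0_general a ha g f hg hf A hA
end

section
/- (Cauchy–Davenport Theorem over a field.) Let A_1,...,A_n be finite nonempty subsets of a field F. Then the sumset A_1 + ... + A_n = {x_1 + ... + x_n : x_1 ∈ A_1, ..., x_n ∈ A_n} has cardinality at least min{p(F), |A_1| + ... + |A_n| - n + 1}. -/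
/-!
Every nonzero element of a field `F` has additive order `p(F)`, so every nontrivial additive
subgroup has at least `p(F)` elements. DeVos's form of the Cauchy–Davenport theorem bounds the
sumset of two finite sets in a group by the least order of a nontrivial subgroup, and adding the
sets one at a time extends the bound to finitely many summands.
-/

open Finset
open scoped Pointwise

lemma ringChar_dvd_addOrderOf {R : Type*} [NonAssocSemiring R] [NoZeroDivisors R] {a : R}
    (ha : a ≠ 0) : ringChar R ∣ addOrderOf a := by
  have h : (addOrderOf a : R) * a = 0 := by rw [← nsmul_eq_mul, addOrderOf_nsmul_eq_zero]
  exact ringChar.dvd ((mul_eq_zero.mp h).resolve_right ha)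

lemma fieldCharE_le_of_ringChar_dvd {F : Type*} [Field F] {m : ℕ} (hm : m ≠ 0)
    (h : ringChar F ∣ m) : fieldCharE F ≤ m := by
  rw [fieldCharE, if_neg (ne_zero_of_dvd_ne_zero hm h)]
  exact_mod_cast Nat.le_of_dvd (Nat.pos_of_ne_zero hm) h

lemma fieldCharE_le_minOrder (F : Type*) [Field F] : fieldCharE F ≤ AddMonoid.minOrder F :=
  AddMonoid.le_minOrder.mpr fun _ ha hfin ↦
    fieldCharE_le_of_ringChar_dvd hfin.addOrderOf_pos.ne' (ringChar_dvd_addOrderOf ha)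

section Sumset

variable {G ι : Type*} [DecidableEq G]

lemma coe_sum_univ_eq_setOf [AddCommMonoid G] [Fintype ι] (A : ι → Finset G) :
    ((∑ i, A i : Finset G) : Set G) = {y | ∃ x : ι → G, (∀ i, x i ∈ A i) ∧ ∑ i, x i = y} := by
  ext y
  simp [Set.mem_fintype_sum]

lemma nonempty_sum_of_forall_nonempty [AddCommMonoid G] {s : Finset ι} {A : ι → Finset G}
    (hA : ∀ i ∈ s, (A i).Nonempty) : (∑ i ∈ s, A i).Nonempty :=
  sum_induction A Finset.Nonempty (fun _ _ ↦ .add) zero_nonempty hA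

/- Subtracting `1` from each cardinality, rather than `#s` from their sum, makes the bound
additive in `s`. -/
lemma cauchy_davenport_minOrder_sum [AddCommGroup G] {s : Finset ι} {A : ι → Finset G}
    (hA : ∀ i ∈ s, (A i).Nonempty) :
    min (AddMonoid.minOrder G) ↑(∑ i ∈ s, (#(A i) - 1) + 1) ≤ (#(∑ i ∈ s, A i) : ℕ∞) := by
  classical
  induction s using Finset.induction_on with
  | empty => simp
  | insert j s hj ih =>
    rw [forall_mem_insert] at hA
    obtain ⟨hAj, hAs⟩ := hA
    rw [sum_insert hj, sum_insert hj]
    have two_sets := cauchy_davenport_minOrder_add hAj (nonempty_sum_of_forall_nonempty hAs)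
    have card_mono : #(∑ i ∈ s, A i) ≤ #(A j + ∑ i ∈ s, A i) := card_le_card_add_left hAj
    have card_pos : 0 < #(A j) := hAj.card_pos
    simp only [min_le_iff, Nat.cast_le] at ih two_sets ⊢
    rcases ih hAs with small_order | card_sum
    · exact .inl (small_order.trans (Nat.cast_le.mpr card_mono))
    · exact two_sets.imp_right fun card_add ↦ by omega

end Sumset

theorem stmt1_general {G ι : Type*} [AddCommGroup G] [Fintype ι] (A : ι → Finset G)
    (hA : ∀ i, (A i).Nonempty) :
    min (AddMonoid.minOrder G) (((∑ i, (A i).card) - Fintype.card ι + 1 : ℕ))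
      ≤ (({y | ∃ x : ι → G, (∀ i, x i ∈ A i) ∧ ∑ i, x i = y} : Set G).ncard : ℕ∞) := by
  classical
  have card_sub : ∑ i, (#(A i) - 1) = ∑ i, #(A i) - Fintype.card ι := by
    rw [sum_tsub_distrib _ fun i _ ↦ (hA i).card_pos, Fintype.card_eq_sum_ones]
  rw [← coe_sum_univ_eq_setOf, Set.ncard_coe_finset, ← card_sub]
  exact cauchy_davenport_minOrder_sum fun i _ ↦ hA i

/-- Cauchy–Davenport theorem over a field. -/
theorem stmt1 {F : Type*} [Field F] (n : ℕ)
    (A : Fin n → Finset F) (hA : ∀ i, (A i).Nonempty) :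
    min (fieldCharE F) (((∑ i, (A i).card) - n + 1 : ℕ))
      ≤ (({y | ∃ x : Fin n → F, (∀ i, x i ∈ A i) ∧ ∑ i, x i = y} : Set F).ncard : ℕ∞) :=
  (min_le_min_right _ (fieldCharE_le_minOrder F)).trans <| by
    simpa only [Fintype.card_fin] using stmt1_general A hA
end

section
/- Let F be a field of characteristic zero and let f(x_1,...,x_n) = a_1 x_1^k + ... + a_n x_n^k + g(x_1,...,x_n) be a polynomial over F, where k is a positive integer, a_1,...,a_n are nonzero elements of F, and g is a polynomial of total degree less than k. Then for any finite nonempty subset A of F, the value set {f(x_1,...,x_n) : x_1,...,x_n ∈ A} has cardinality at least n·⌊(|A|-1)/k⌋ + 1. -/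
/-!
Let `V` be the set of values of `f` on the box `∏ i, A i`. The polynomial `∏ v ∈ V, (f - v)`
vanishes on the box, and its part of degree `k * #V` is the power `(∑ i, a i * X i ^ k) ^ #V`. By
the multinomial theorem the coefficient of `∏ i, X i ^ (k * c i)` in this power, where
`∑ i, c i = #V`, is a multinomial coefficient times a product of powers of the `a i`, so it is
nonzero when `(#V)! ≠ 0` in the coefficient ring. If `#V ≤ ∑ i, ⌊(#(A i) - 1) / k⌋`, then the `c i`
can be chosen such that `k * c i < #(A i)` for all `i`, which contradicts the Combinatorial
Nullstellensatz.
-/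

section

open Finset MvPolynomial

section LeadingForm

variable {σ R : Type*} [CommSemiring R]

theorem homogeneousComponent_add_mul_of_totalDegree_le_s2 {p q : MvPolynomial σ R} {d e : ℕ}
    (hp : p.totalDegree ≤ d) (hq : q.totalDegree ≤ e) :
    homogeneousComponent (d + e) (p * q) =
      homogeneousComponent d p * homogeneousComponent e q := by
  classical
  have hhom : (homogeneousComponent d p * homogeneousComponent e q).IsHomogeneous (d + e) :=
    (homogeneousComponent_isHomogeneous d p).mul (homogeneousComponent_isHomogeneous e q)
  ext t
  by_cases ht : t.degree = d + e
  · rw [coeff_homogeneousComponent, if_pos ht, coeff_mul, coeff_mul]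
    refine sum_congr rfl fun ⟨u, v⟩ huv ↦ ?_
    have hdeg : u.degree + v.degree = d + e := by
      rw [← map_add, mem_antidiagonal.mp huv, ht]
    simp only [coeff_homogeneousComponent]
    rcases lt_trichotomy u.degree d with hu | hu | hu
    · have hv : coeff v q = 0 :=
        coeff_eq_zero_of_totalDegree_lt (hq.trans_lt (by lia : e < v.degree))
      simp only [hv, mul_zero, ite_self]
    · rw [if_pos hu, if_pos (by lia)]
    · have hu' : coeff u p = 0 := coeff_eq_zero_of_totalDegree_lt (hp.trans_lt hu)
      simp only [hu', zero_mul, ite_self]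
  · rw [coeff_homogeneousComponent, if_neg ht, hhom.coeff_eq_zero ht]

theorem homogeneousComponent_sum_prod_of_totalDegree_le {ι : Type*} (s : Finset ι)
    {p : ι → MvPolynomial σ R} {d : ι → ℕ} (hp : ∀ i ∈ s, (p i).totalDegree ≤ d i) :
    homogeneousComponent (∑ i ∈ s, d i) (∏ i ∈ s, p i) =
      ∏ i ∈ s, homogeneousComponent (d i) (p i) := by
  classical
  induction s using Finset.induction_on with
  | empty => simp only [sum_empty, prod_empty, homogeneousComponent_zero, coeff_zero_one, C_1]
  | insert j s hj ih =>
    rw [forall_mem_insert] at hp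
    have hs : (∏ i ∈ s, p i).totalDegree ≤ ∑ i ∈ s, d i :=
      (totalDegree_finsetProd s p).trans (sum_le_sum hp.2)
    rw [sum_insert hj, prod_insert hj, prod_insert hj,
      homogeneousComponent_add_mul_of_totalDegree_le_s2 hp.1 hs, ih hp.2]

end LeadingForm

theorem coeff_homogeneousComponent_pow_card_eq_zero {σ R : Type*} [Finite σ] [CommRing R]
    [IsDomain R] {f : MvPolynomial σ R} {k : ℕ} (hk : 0 < k) (hf : f.totalDegree ≤ k)
    (A : σ → Finset R) {V : Finset R} (hV : ∀ x : σ → R, (∀ i, x i ∈ A i) → eval x f ∈ V)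
    {t : σ →₀ ℕ} (ht : ∀ i, t i < #(A i)) :
    coeff t (homogeneousComponent k f ^ #V) = 0 := by
  by_contra hcoeff
  set P := ∏ v ∈ V, (f - C v)
  have hfCdeg (v : R) : (f - C v).totalDegree ≤ k := (totalDegree_sub_C_le f v).trans hf
  have htop : homogeneousComponent (#V * k) P = homogeneousComponent k f ^ #V := by
    have h := homogeneousComponent_sum_prod_of_totalDegree_le V fun v _ ↦ hfCdeg v
    have hC (v : R) : homogeneousComponent k (C v : MvPolynomial σ R) = 0 :=
      homogeneousComponent_eq_zero _ _ (by rwa [totalDegree_C])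
    simpa only [sum_const, smul_eq_mul, map_sub, hC, sub_zero, prod_const] using h
  have htdeg : t.degree = #V * k := by
    by_contra hne
    exact hcoeff (by rw [← htop, coeff_homogeneousComponent, if_neg hne])
  have hPt : coeff t P ≠ 0 := by
    rwa [← htop, coeff_homogeneousComponent, if_pos htdeg] at hcoeff
  have hPdeg : P.totalDegree = t.degree := by
    refine le_antisymm ?_ (le_totalDegree (mem_support_iff.mpr hPt))
    calc P.totalDegree ≤ ∑ v ∈ V, (f - C v).totalDegree := totalDegree_finsetProd V _
      _ ≤ #V * k := sum_le_card_nsmul V _ k fun v _ ↦ hfCdeg v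
      _ = t.degree := htdeg.symm
  obtain ⟨x, hxA, hxP⟩ := combinatorial_nullstellensatz_exists_eval_nonzero P t hPt hPdeg A ht
  refine hxP ?_
  rw [eval_prod]
  exact prod_eq_zero (hV x hxA) (by rw [map_sub, eval_C, sub_self])

section DiagonalForm

variable {ι R : Type*} [Fintype ι] [CommSemiring R]

theorem isHomogeneous_sum_C_mul_X_pow (a : ι → R) (k : ℕ) :
    (∑ i, C (a i) * X i ^ k).IsHomogeneous k :=
  IsHomogeneous.sum _ _ k fun i _ ↦ isHomogeneous_C_mul_X_pow (a i) i k

theorem prod_C_mul_X_pow_pow (a : ι → R) (k : ℕ) (c : ι →₀ ℕ) :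
    ∏ i, (C (a i) * X i ^ k : MvPolynomial ι R) ^ c i = monomial (k • c) (∏ i, a i ^ c i) := by
  rw [monomial_eq, Finsupp.prod_fintype _ _ fun i ↦ pow_zero _]
  simp only [mul_pow, prod_mul_distrib, ← pow_mul, map_prod, map_pow, Finsupp.smul_apply,
    smul_eq_mul]

theorem coeff_sum_C_mul_X_pow_pow_degree (a : ι → R) {k : ℕ} (hk : k ≠ 0) (c : ι →₀ ℕ) :
    coeff (k • c) ((∑ i, C (a i) * X i ^ k) ^ c.degree) =
      Nat.multinomial univ c * ∏ i, a i ^ c i := by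
  classical
  have hterm (b : ι → ℕ) :
      coeff (k • c) ((Nat.multinomial univ b : MvPolynomial ι R) * ∏ i, (C (a i) * X i ^ k) ^ b i) =
        if b = c then (Nat.multinomial univ b : R) * ∏ i, a i ^ b i else 0 := by
    obtain ⟨b, rfl⟩ : ∃ b' : ι →₀ ℕ, ⇑b' = b := Finsupp.equivFunOnFinite.surjective b
    have hbc : k • b = k • c ↔ (b : ι → ℕ) = c := by
      rw [smul_right_inj hk, DFunLike.coe_fn_eq]
    rw [prod_C_mul_X_pow_pow, ← map_natCast C, coeff_C_mul, coeff_monomial, mul_ite,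
      mul_zero]
    simp only [hbc]
  have hc : ⇑c ∈ piAntidiag univ c.degree := by simp [c.degree_eq_sum]
  rw [sum_pow_eq_sum_piAntidiag, coeff_sum, sum_congr rfl fun b _ ↦ hterm b,
    sum_ite_eq' _ _ _, if_pos hc]

end DiagonalForm

theorem natCast_multinomial_ne_zero {ι R : Type*} [Semiring R] {s : Finset ι} {c : ι → ℕ}
    (h : ((∑ i ∈ s, c i).factorial : R) ≠ 0) : (Nat.multinomial s c : R) ≠ 0 :=
  ne_zero_of_dvd_ne_zero h (Nat.cast_dvd_cast (Dvd.intro_left _ (Nat.multinomial_spec s c)))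

theorem exists_finsupp_degree_eq_forall_mul_lt {ι : Type*} [Fintype ι] {k N : ℕ} {s : ι → ℕ}
    (hs : ∀ i, s i ≠ 0) (hN : N ≤ ∑ i, (s i - 1) / k) :
    ∃ c : ι →₀ ℕ, c.degree = N ∧ ∀ i, k * c i < s i := by
  obtain ⟨c, hcs, hcN⟩ :=
    (Finsupp.equivFunOnFinite.symm fun i ↦ (s i - 1) / k).exists_le_degree_eq N
      (by simpa [Finsupp.degree_eq_sum] using hN)
  refine ⟨c, hcN, fun i ↦ ?_⟩
  calc k * c i ≤ k * ((s i - 1) / k) := Nat.mul_le_mul_left k (hcs i)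
    _ ≤ s i - 1 := Nat.mul_div_le _ k
    _ < s i := Nat.sub_one_lt (hs i)

/-- In characteristic `p > 0` the condition on the factorial says `N < p`, so the best choice of `N`
gives the lower bound `min p (∑ i, ⌊(#(A i) - 1) / k⌋ + 1)`. -/
theorem stmt2_general {ι R : Type*} [Fintype ι] [CommRing R] [IsDomain R] {k : ℕ}
    {a : ι → R} (ha : ∀ i, a i ≠ 0) {g f : MvPolynomial ι R} (hg : g.totalDegree < k)
    (hf : f = (∑ i, C (a i) * X i ^ k) + g) (A : ι → Finset R) (hA : ∀ i, (A i).Nonempty)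
    {N : ℕ} (hN : (N.factorial : R) ≠ 0) (hNA : N ≤ ∑ i, (#(A i) - 1) / k) :
    N + 1 ≤ {y | ∃ x : ι → R, (∀ i, x i ∈ A i) ∧ eval x f = y}.ncard := by
  classical
  have hk : 0 < k := pos_of_gt hg
  have hform := isHomogeneous_sum_C_mul_X_pow a k
  have hfdeg : f.totalDegree ≤ k :=
    hf ▸ (totalDegree_add _ _).trans (max_le hform.totalDegree_le hg.le)
  have hftop : homogeneousComponent k f = ∑ i, C (a i) * X i ^ k := by
    rw [hf, map_add, homogeneousComponent_eq_self hform, homogeneousComponent_eq_zero _ _ hg,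
      add_zero]
  set V : Finset R := (Fintype.piFinset A).image fun x ↦ eval x f
  have hV : {y | ∃ x : ι → R, (∀ i, x i ∈ A i) ∧ eval x f = y} = V := by
    ext y
    simp [V]
  rw [hV, Set.ncard_coe_finset]
  by_contra! hlt
  have hVN : #V ≤ N := Nat.lt_succ_iff.mp hlt
  obtain ⟨c, hcV, hcA⟩ :=
    exists_finsupp_degree_eq_forall_mul_lt (fun i ↦ (hA i).card_ne_zero) (hVN.trans hNA)
  have hzero : coeff (k • c) ((∑ i, C (a i) * X i ^ k) ^ c.degree) = 0 := by
    rw [← hftop, hcV]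
    refine coeff_homogeneousComponent_pow_card_eq_zero hk hfdeg A (fun x hx ↦ ?_) hcA
    exact mem_image_of_mem _ (Fintype.mem_piFinset.mpr hx)
  have hfact : ((∑ i, c i).factorial : R) ≠ 0 := by
    rw [← c.degree_eq_sum, hcV]
    exact ne_zero_of_dvd_ne_zero hN (Nat.cast_dvd_cast (Nat.factorial_dvd_factorial hVN))
  rw [coeff_sum_C_mul_X_pow_pow_degree a hk.ne'] at hzero
  exact mul_ne_zero (natCast_multinomial_ne_zero hfact)
    (prod_ne_zero_iff.mpr fun i _ ↦ pow_ne_zero _ (ha i)) hzero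

end

theorem stmt2 {F : Type*} [Field F] [CharZero F] (n k : ℕ) (hk : 0 < k)
    (a : Fin n → F) (ha : ∀ i, a i ≠ 0)
    (g f : MvPolynomial (Fin n) F) (hg : g.totalDegree < k)
    (hf : f = (∑ i, MvPolynomial.C (a i) * MvPolynomial.X i ^ k) + g)
    (A : Finset F) (hA : A.Nonempty) :
    n * ((A.card - 1) / k) + 1
      ≤ ({y | ∃ x : Fin n → F, (∀ i, x i ∈ A) ∧ MvPolynomial.eval x f = y} : Set F).ncard :=
  stmt2_general ha hg hf (fun _ ↦ A) (fun _ ↦ hA)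
    (Nat.cast_ne_zero.mpr (Nat.factorial_ne_zero _)) (by simp)
end

section
/- Let F be a field, let a_1 and a_2 be nonzero elements of F, and let A be a finite subset of F. Let δ = 1 if a_1 = -a_2 and δ = 0 otherwise. Then the restricted sumset {a_1 x_1 + a_2 x_2 : x_1, x_2 ∈ A and x_1 ≠ x_2} has cardinality at least min{p(F) - δ, 2|A| - 3}. -/
open scoped Classical

/-- `p(F)`: the characteristic of `F` if positive, `+∞` if `F` has characteristic zero,
as an extended integer. -/
noncomputable def fieldCharZ (F : Type*) [Field F] : WithTop ℤ :=
  if ringChar F = 0 then ⊤ else (ringChar F : WithTop ℤ)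

/-!
If `2n` values covered all `a * x + b * y` with `x ≠ y` in an `(n + 2)`-element set `A`, then
`X - Y` times the product of the `a * X + b * Y - c`, over these values `c`, would vanish on
`A × (A \ {x₀})`. By the combinatorial Nullstellensatz its coefficient at `X ^ (n + 1) * Y ^ n`
would be zero. Multiplied by `(n + 1) * b`, this coefficient is `centralBinom n * a ^ n * b ^ n *
((n + 1) * b - n * a)`. The binomial coefficient is nonzero as long as `2n` is below the
characteristic, and if `a + b ≠ 0` the last factor is nonzero, possibly after exchanging `a` and
`b`. When the characteristic is odd and smaller than `2|A| - 3`, a subset of `A` suffices. When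
`a + b = 0`, the restricted sumset contains every nonzero difference of two elements of `a * A`, and
Cauchy–Davenport applies.
-/

open AddMonoid Finset

section Characteristic

variable {R : Type*} [NonAssocSemiring R] [NoZeroDivisors R]

lemma addOrderOf_eq_of_charP (p : ℕ) [CharP R p] {x : R} (hx : x ≠ 0) : addOrderOf x = p := by
  refine Nat.dvd_right_iff_eq.1 fun n ↦ ?_
  rw [addOrderOf_dvd_iff_nsmul_eq_zero, nsmul_eq_mul, mul_eq_zero, or_iff_left hx,
    CharP.cast_eq_zero_iff R p]

variable [Nontrivial R]

lemma minOrder_eq_ringChar :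
    minOrder R = if ringChar R = 0 then ⊤ else (ringChar R : ℕ∞) := by
  split_ifs with hp
  · refine top_le_iff.1 (le_minOrder.2 fun x hx hfin ↦ ?_)
    exact absurd (addOrderOf_eq_of_charP (ringChar R) hx ▸ hp) hfin.addOrderOf_pos.ne'
  · have hone : addOrderOf (1 : R) = ringChar R := addOrderOf_eq_of_charP _ one_ne_zero
    refine le_antisymm ?_ (le_minOrder.2 fun x hx _ ↦ ?_)
    · exact hone ▸ minOrder_le_addOrderOf one_ne_zero
        (addOrderOf_pos_iff.1 (hone ▸ Nat.pos_of_ne_zero hp))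
    · rw [addOrderOf_eq_of_charP (ringChar R) hx]

lemma natCast_choose_ne_zero {m k : ℕ} (hkm : k ≤ m) (hm : ringChar R = 0 ∨ m < ringChar R) :
    (m.choose k : R) ≠ 0 := by
  rw [Ne, ringChar.spec]
  rcases CharP.char_is_prime_or_zero R (ringChar R) with hp | hp
  · exact (hp.coprime_iff_not_dvd).1 (hp.coprime_choose_of_lt (hm.resolve_left hp.ne_zero) hkm)
  · rw [hp, zero_dvd_iff]
    exact (Nat.choose_pos hkm).ne'

end Characteristic

section PolynomialMethod

open MvPolynomial

variable {σ R : Type*}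

lemma coeff_mul_aeval_of_isHomogeneous [CommSemiring R] {H L : MvPolynomial σ R} {m k : ℕ}
    (hH : H.IsHomogeneous m) (hL : L.IsHomogeneous 1) (q : Polynomial R) {d : σ →₀ ℕ}
    (hd : d.degree = m + k) :
    coeff d (H * Polynomial.aeval L q) = q.coeff k * coeff d (H * L ^ k) := by
  have hhom (i : ℕ) : (H * L ^ i).IsHomogeneous (m + i) := by
    simpa only [one_mul] using hH.mul (hL.pow i)
  rw [Polynomial.aeval_def, Polynomial.eval₂_eq_sum, Polynomial.sum_def, mul_sum, coeff_sum]
  simp only [algebraMap_eq, mul_left_comm H, coeff_C_mul]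
  refine sum_eq_single k (fun i _ hik ↦ ?_) fun hk ↦ ?_
  · rw [(hhom i).coeff_eq_zero (by omega), mul_zero]
  · rw [Polynomial.notMem_support_iff.1 hk, zero_mul]

lemma totalDegree_aeval_le [CommSemiring R] (L : MvPolynomial σ R) (q : Polynomial R) :
    (Polynomial.aeval L q).totalDegree ≤ q.natDegree * L.totalDegree := by
  rw [Polynomial.aeval_eq_sum_range]
  refine totalDegree_finsetSum_le fun i hi ↦ ?_
  calc (q.coeff i • L ^ i).totalDegree ≤ (L ^ i).totalDegree := totalDegree_smul_le _ _
    _ ≤ i * L.totalDegree := totalDegree_pow _ _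
    _ ≤ q.natDegree * L.totalDegree := Nat.mul_le_mul_right _ (mem_range_succ_iff.1 hi)

lemma exists_monic_natDegree_eq_forall_eval_eq_zero [CommRing R] [Nontrivial R] {S : Finset R}
    {k : ℕ} (hk : #S ≤ k) :
    ∃ q : Polynomial R, q.Monic ∧ q.natDegree = k ∧ ∀ c ∈ S, q.eval c = 0 := by
  have hmonic : (∏ c ∈ S, (Polynomial.X - Polynomial.C c)).Monic :=
    Polynomial.monic_prod_X_sub_C id S
  refine ⟨Polynomial.X ^ (k - #S) * ∏ c ∈ S, (Polynomial.X - Polynomial.C c),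
    (Polynomial.monic_X_pow _).mul hmonic, ?_, fun c hc ↦ ?_⟩
  · rw [(Polynomial.monic_X_pow _).natDegree_mul hmonic, Polynomial.natDegree_X_pow,
      Polynomial.natDegree_finsetProd_X_sub_C_eq_card, Nat.sub_add_cancel hk]
  · rw [Polynomial.eval_mul, Polynomial.eval_prod, prod_eq_zero hc (by simp), mul_zero]

-- This is the form in which Alon, Nathanson and Ruzsa use the combinatorial Nullstellensatz.
theorem lt_card_of_coeff_mul_pow_ne_zero [Finite σ] [CommRing R] [IsDomain R]
    {H L : MvPolynomial σ R} {m k : ℕ} (hH : H.IsHomogeneous m) (hL : L.IsHomogeneous 1)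
    {t : σ →₀ ℕ} (ht : t.degree = m + k) (hcoeff : coeff t (H * L ^ k) ≠ 0)
    {A : σ → Finset R} (hA : ∀ i, t i < #(A i)) {S : Finset R}
    (hS : ∀ x : σ → R, (∀ i, x i ∈ A i) → eval x H ≠ 0 → eval x L ∈ S) : k < #S := by
  by_contra! hk
  obtain ⟨q, hq, hqdeg, hqS⟩ := exists_monic_natDegree_eq_forall_eval_eq_zero hk
  set f := H * Polynomial.aeval L q
  have hft : coeff t f ≠ 0 := by
    rwa [coeff_mul_aeval_of_isHomogeneous hH hL q ht, ← hqdeg, hq.coeff_natDegree, one_mul, hqdeg]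
  have hfdeg : f.totalDegree = t.degree := by
    refine le_antisymm ?_ (le_totalDegree (mem_support_iff.2 hft))
    calc f.totalDegree ≤ H.totalDegree + q.natDegree * L.totalDegree :=
          (totalDegree_mul _ _).trans (Nat.add_le_add_left (totalDegree_aeval_le L q) _)
      _ ≤ m + k * 1 := by
          rw [hqdeg]
          gcongr
          exacts [hH.totalDegree_le, hL.totalDegree_le]
      _ = t.degree := by rw [ht, mul_one]
  obtain ⟨x, hxA, hx⟩ := combinatorial_nullstellensatz_exists_eval_nonzero f t hft hfdeg A hA
  have hxf : eval x f = eval x H * q.eval (eval x L) := by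
    have hC : (eval x).comp C = RingHom.id R := RingHom.ext (eval_C (f := x) ·)
    rw [map_mul, Polynomial.aeval_def, Polynomial.hom_eval₂, algebraMap_eq, hC, Polynomial.eval₂_id]
  rw [hxf] at hx
  exact right_ne_zero_of_mul hx (hqS _ (hS x hxA (left_ne_zero_of_mul hx)))

lemma coeff_add_pow_C_mul_X [CommSemiring R] (a b : R) (i j : ℕ) :
    coeff (Finsupp.single 0 i + Finsupp.single 1 j)
      ((C a * X 0 + C b * X 1 : MvPolynomial (Fin 2) R) ^ (i + j)) =
      (i + j).choose i * a ^ i * b ^ j := by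
  have h := coeff_linearCombination_X_pow_of_fintype ![a, b]
    (Finsupp.single 0 i + Finsupp.single 1 j) (i + j)
  rw [if_pos (by simp [Finsupp.sum_fintype]),
    Finsupp.multinomial_eq_of_support_subset (subset_univ _), univ_fin2,
    Nat.binomial_eq_choose Fin.zero_ne_one] at h
  simpa [Finsupp.prod_fintype, smul_eq_C_mul, mul_assoc] using h

-- The factor `(n + 1) * b` clears the denominator `n + 1` in the ratio of two consecutive binomial
-- coefficients and avoids the exponent `n - 1` of `b`, which would be truncated at `n = 0`.
lemma coeff_X_sub_X_mul_pow [CommRing R] (a b : R) (n : ℕ) :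
    (n + 1) * b * coeff (Finsupp.single 0 (n + 1) + Finsupp.single 1 n)
      ((X 0 - X 1) * (C a * X 0 + C b * X 1 : MvPolynomial (Fin 2) R) ^ (2 * n)) =
      n.centralBinom * a ^ n * b ^ n * ((n + 1) * b - n * a) := by
  set L : MvPolynomial (Fin 2) R := C a * X 0 + C b * X 1
  have hX₀ : coeff (Finsupp.single 0 (n + 1) + Finsupp.single 1 n) (X 0 * L ^ (2 * n)) =
      n.centralBinom * a ^ n * b ^ n := by
    rw [Finsupp.single_add, add_comm (Finsupp.single 0 n), add_assoc, coeff_X_mul, two_mul,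
      coeff_add_pow_C_mul_X, Nat.centralBinom, two_mul]
  have hX₁ : (n + 1) * b * coeff (Finsupp.single 0 (n + 1) + Finsupp.single 1 n)
      (X 1 * L ^ (2 * n)) = n * n.centralBinom * a ^ (n + 1) * b ^ n := by
    rcases n with _ | m
    · simp
    · have hchoose : ((2 * (m + 1)).choose (m + 2) : R) * (m + 2) =
          (m + 1).centralBinom * (m + 1) := by
        have := Nat.choose_succ_right_eq (2 * (m + 1)) (m + 1)
        rw [show 2 * (m + 1) - (m + 1) = m + 1 by omega] at this
        exact_mod_cast congrArg (Nat.cast : ℕ → R) this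
      rw [Finsupp.single_add (1 : Fin 2), add_comm (Finsupp.single 1 m), add_left_comm, coeff_X_mul,
        show 2 * (m + 1) = m + 2 + m by ring, coeff_add_pow_C_mul_X,
        show m + 2 + m = 2 * (m + 1) by ring]
      push_cast
      linear_combination a ^ (m + 2) * b ^ (m + 1) * hchoose
  rw [sub_mul, coeff_sub, mul_sub, hX₀, hX₁]
  ring

end PolynomialMethod

section RestrictedSumset

variable {R : Type*}

/-- The restricted sumset `{a * x + b * y : x, y ∈ A, x ≠ y}`, whose cardinality is to be bounded
below. It is encoded as a finset, the image of the off-diagonal pairs of `A`. -/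
noncomputable def restrictedSumset [Add R] [Mul R] (a b : R) (A : Finset R) : Finset R :=
  A.offDiag.image fun x ↦ a * x.1 + b * x.2

lemma mem_restrictedSumset [Add R] [Mul R] {a b : R} {A : Finset R} {z : R} :
    z ∈ restrictedSumset a b A ↔ ∃ x ∈ A, ∃ y ∈ A, x ≠ y ∧ a * x + b * y = z := by
  simp only [restrictedSumset, mem_image, mem_offDiag, Prod.exists, and_assoc]
  grind

lemma coe_restrictedSumset [Add R] [Mul R] (a b : R) (A : Finset R) :
    (restrictedSumset a b A : Set R) = {z | ∃ x ∈ A, ∃ y ∈ A, x ≠ y ∧ a * x + b * y = z} :=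
  Set.ext fun _ ↦ mem_restrictedSumset

lemma restrictedSumset_comm [AddCommMagma R] [Mul R] (a b : R) (A : Finset R) :
    restrictedSumset a b A = restrictedSumset b a A := by
  ext z
  simp only [mem_restrictedSumset]
  constructor <;> rintro ⟨x, hx, y, hy, hxy, rfl⟩ <;> exact ⟨y, hy, x, hx, hxy.symm, add_comm _ _⟩

lemma restrictedSumset_subset [Add R] [Mul R] (a b : R) {A B : Finset R} (hAB : A ⊆ B) :
    restrictedSumset a b A ⊆ restrictedSumset a b B :=
  image_subset_image (offDiag_mono hAB)

lemma card_le_card_restrictedSumset_add_one [Ring R] [NoZeroDivisors R] (a : R) {b : R}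
    (hb : b ≠ 0) (A : Finset R) : #A ≤ #(restrictedSumset a b A) + 1 := by
  rcases A.eq_empty_or_nonempty with rfl | ⟨x, hx⟩
  · simp
  have hinj : Function.Injective fun y ↦ a * x + b * y :=
    (add_right_injective _).comp (mul_right_injective₀ hb)
  have hsub : (A.erase x).image (fun y ↦ a * x + b * y) ⊆ restrictedSumset a b A := by
    refine image_subset_iff.2 fun y hy ↦ mem_restrictedSumset.2 ?_
    exact ⟨x, hx, y, mem_of_mem_erase hy, (ne_of_mem_erase hy).symm, rfl⟩
  rw [← card_erase_add_one hx, ← card_image_of_injective _ hinj]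
  exact Nat.add_le_add_right (card_le_card hsub) 1

open scoped Pointwise in
theorem min_minOrder_sub_one_le_card_restrictedSumset_neg [Ring R] [NoZeroDivisors R] {a : R}
    (ha : a ≠ 0) (A : Finset R) :
    min (minOrder R - 1) ↑(2 * #A - 2) ≤ (#(restrictedSumset a (-a) A) : ℕ∞) := by
  rcases A.eq_empty_or_nonempty with rfl | hA
  · simp
  set B := A.image (a * ·)
  have hB : B.Nonempty := hA.image _
  have hBcard : #B = #A := card_image_of_injective _ (mul_right_injective₀ ha)
  have hsub : B + -B ⊆ insert 0 (restrictedSumset a (-a) A) := by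
    rw [← sub_eq_add_neg, sub_subset_iff]
    intro u hu v hv
    obtain ⟨x, hx, rfl⟩ := mem_image.1 hu
    obtain ⟨y, hy, rfl⟩ := mem_image.1 hv
    by_cases hxy : x = y
    · simp [hxy]
    · exact mem_insert_of_mem (mem_restrictedSumset.2 ⟨x, hx, y, hy, hxy, by noncomm_ring⟩)
  have hcard : #(B + -B) ≤ #(restrictedSumset a (-a) A) + 1 :=
    (card_le_card hsub).trans (card_insert_le _ _)
  have hCD := (cauchy_davenport_minOrder_add hB hB.neg).trans (Nat.cast_le.2 hcard)
  rw [card_neg, hBcard] at hCD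
  rcases min_le_iff.1 hCD with h | h
  · exact min_le_of_left_le (tsub_le_iff_right.2 (by exact_mod_cast h))
  · have : #A + #A - 1 ≤ #(restrictedSumset a (-a) A) + 1 := by exact_mod_cast h
    exact min_le_of_right_le (by norm_cast; omega)

variable [CommRing R] [IsDomain R] {a b : R}

lemma two_mul_lt_card_restrictedSumset_of_ne (ha : a ≠ 0) (hb : b ≠ 0) {n : ℕ}
    (hn : (n.centralBinom : R) ≠ 0) (hab : (n + 1) * b ≠ n * a) {A : Finset R}
    (hA : #A = n + 2) : 2 * n < #(restrictedSumset a b A) := by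
  obtain ⟨x₀, hx₀⟩ : A.Nonempty := card_pos.1 (by omega)
  have hcoeff : (n + 1) * b * MvPolynomial.coeff (Finsupp.single 0 (n + 1) + Finsupp.single 1 n)
      ((.X 0 - .X 1) * (.C a * .X 0 + .C b * .X 1 : MvPolynomial (Fin 2) R) ^ (2 * n)) ≠ 0 := by
    rw [coeff_X_sub_X_mul_pow]
    exact mul_ne_zero (mul_ne_zero (mul_ne_zero hn (pow_ne_zero _ ha)) (pow_ne_zero _ hb))
      (sub_ne_zero.2 hab)
  refine lt_card_of_coeff_mul_pow_ne_zero (m := 1) (A := ![A, A.erase x₀])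
    ((MvPolynomial.isHomogeneous_X R 0).sub (MvPolynomial.isHomogeneous_X R 1))
    ((MvPolynomial.isHomogeneous_C_mul_X a 0).add (MvPolynomial.isHomogeneous_C_mul_X b 1))
    ?_ (right_ne_zero_of_mul hcoeff) ?_ fun x hxA hx ↦ ?_
  · simp [Finsupp.degree_eq_sum]
    omega
  · rw [Fin.forall_fin_two]
    simp [card_erase_of_mem hx₀, hA]
  · refine mem_restrictedSumset.2
      ⟨x 0, hxA 0, x 1, mem_of_mem_erase (hxA 1), sub_ne_zero.1 ?_, by simp⟩
    simpa using hx

lemma two_mul_lt_card_restrictedSumset (ha : a ≠ 0) (hb : b ≠ 0) (hab : a ≠ -b) {n : ℕ}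
    (hn : (n.centralBinom : R) ≠ 0) {A : Finset R} (hA : n + 2 ≤ #A) :
    2 * n < #(restrictedSumset a b A) := by
  obtain ⟨B, hBA, hB⟩ := exists_subset_card_eq hA
  refine lt_of_lt_of_le ?_ (card_le_card (restrictedSumset_subset a b hBA))
  by_cases h : (n + 1) * b = n * a
  · have h' : (n + 1) * a ≠ n * b := fun h' ↦ hab (by linear_combination h + h')
    rw [restrictedSumset_comm]
    exact two_mul_lt_card_restrictedSumset_of_ne hb ha hn h' hB
  · exact two_mul_lt_card_restrictedSumset_of_ne ha hb hn h hB

theorem min_minOrder_le_card_restrictedSumset (ha : a ≠ 0) (hb : b ≠ 0) (hab : a ≠ -b)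
    (A : Finset R) : min (minOrder R) ↑(2 * #A - 3) ≤ (#(restrictedSumset a b A) : ℕ∞) := by
  have hcast {n : ℕ} (h : ringChar R = 0 ∨ 2 * n < ringChar R) : (n.centralBinom : R) ≠ 0 :=
    natCast_choose_ne_zero (by omega) h
  rcases lt_or_ge #A 2 with hA | hA
  · simp [show 2 * #A - 3 = 0 by omega]
  by_cases hp : ringChar R = 0 ∨ 2 * (#A - 2) < ringChar R
  · have := two_mul_lt_card_restrictedSumset ha hb hab (hcast hp) (A := A) (by omega)
    exact min_le_of_right_le (by norm_cast; omega)
  rw [not_or, not_lt] at hp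
  refine min_le_of_left_le ?_
  rw [minOrder_eq_ringChar, if_neg hp.1, Nat.cast_le]
  rcases ((CharP.char_is_prime_or_zero R _).resolve_right hp.1).eq_two_or_odd with h2 | hodd
  · have := card_le_card_restrictedSumset_add_one a hb A
    omega
  · -- A subset of `A` with `(p + 3) / 2` elements already produces `p` sums.
    have := two_mul_lt_card_restrictedSumset ha hb hab (n := (ringChar R - 1) / 2) (A := A)
      (hcast (by omega)) (by omega)
    omega

theorem min_minOrder_sub_le_card_restrictedSumset (ha : a ≠ 0) (hb : b ≠ 0) (A : Finset R) :
    min (minOrder R - if a = -b then 1 else 0) ↑(2 * #A - 3) ≤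
      (#(restrictedSumset a b A) : ℕ∞) := by
  split_ifs with hab
  · obtain rfl : b = -a := by rw [hab, neg_neg]
    refine le_trans ?_ (min_minOrder_sub_one_le_card_restrictedSumset_neg ha A)
    gcongr
    simp
  · simpa using min_minOrder_le_card_restrictedSumset ha hb hab A

end RestrictedSumset

theorem stmt8_general {R : Type*} [CommRing R] [IsDomain R] (a₁ a₂ : R) (ha₁ : a₁ ≠ 0)
    (ha₂ : a₂ ≠ 0) (A : Finset R) (δ : ℤ) (hδ : δ = if a₁ = -a₂ then 1 else 0) :
    min ((if ringChar R = 0 then ⊤ else (ringChar R : WithTop ℤ)) - (δ : WithTop ℤ))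
        ((2 * (A.card : ℤ) - 3 : ℤ) : WithTop ℤ)
      ≤ ((({y | ∃ x₁ ∈ A, ∃ x₂ ∈ A, x₁ ≠ x₂ ∧ a₁ * x₁ + a₂ * x₂ = y} : Set R).ncard : ℤ)
          : WithTop ℤ) := by
  rw [← coe_restrictedSumset, Set.ncard_coe_finset]
  have h := min_minOrder_sub_le_card_restrictedSumset ha₁ ha₂ A
  rcases min_le_iff.1 h with h | h
  · obtain ⟨hp, hcard⟩ : ringChar R ≠ 0 ∧ ringChar R - δ ≤ #(restrictedSumset a₁ a₂ A) := by
      rw [minOrder_eq_ringChar] at h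
      split_ifs at h hδ <;>
        simp only [ENat.top_sub_one, tsub_zero, top_le_iff, ENat.natCast_ne_top,
          tsub_le_iff_right] at h <;>
        norm_cast at h <;> omega
    rw [if_neg hp]
    exact min_le_of_left_le (WithTop.coe_le_coe.2 hcard)
  · refine min_le_of_right_le (WithTop.coe_le_coe.2 ?_)
    have : 2 * #A - 3 ≤ #(restrictedSumset a₁ a₂ A) := Nat.cast_le.1 h
    omega

theorem stmt8 {F : Type*} [Field F] (a₁ a₂ : F) (ha₁ : a₁ ≠ 0) (ha₂ : a₂ ≠ 0)
    (A : Finset F) (δ : ℤ) (hδ : δ = if a₁ = -a₂ then 1 else 0) :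
    min (fieldCharZ F - (δ : WithTop ℤ)) ((2 * (A.card : ℤ) - 3 : ℤ) : WithTop ℤ)
      ≤ ((({y | ∃ x₁ ∈ A, ∃ x₂ ∈ A, x₁ ≠ x₂ ∧ a₁ * x₁ + a₂ * x₂ = y} : Set F).ncard : ℤ)
          : WithTop ℤ) :=
  stmt8_general a₁ a₂ ha₁ ha₂ A δ hδ
end

section
/- Let F be an algebraically closed field, let a_1,...,a_n be nonzero elements of F, let k be a positive integer, and let q_1,...,q_n be positive integers with each q_i < p(F). Define f_k(x) = x^k - x if the characteristic of F is a prime dividing k, and f_k(x) = x^k otherwise, and let e denote the multiplicative identity of F. For each i = 1,...,n, let R_i be a subset of {x ∈ F : f_k(x) = q_i·a_i^{-1}} with |R_i| = r_i ≤ k-1, and set A_i = {x ∈ F : f_k(x) ∈ {a_i^{-1}, 2e·a_i^{-1}, ..., q_i e·a_i^{-1}}} \ R_i. Then |A_i| = k·q_i - r_i, ⌊(|A_i|-1)/k⌋ = q_i - 1 for each i, and |{a_1 f_k(x_1) + ... + a_n f_k(x_n) : x_1 ∈ A_1, ..., x_n ∈ A_n}| = min{p(F), ⌊(|A_1|-1)/k⌋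 + ... + ⌊(|A_n|-1)/k⌋ + 1}; in particular the lower bound of Theorem 1.1 is attained. -/
open scoped Classical

/-!
Each `f_k` is exactly `k`-to-one over the nonzero elements of a separably closed field, because
`f_k(X) - c` is separable of degree `k`. As `q_i < p(F)`, the set `A_i ∪ R_i` is the disjoint union
of `q_i` such fibres, on which `a_i f_k` takes the values `1, …, q_i`. Removing fewer than `k`
points empties no fibre, so `a_i f_k(A_i) = {1, …, q_i}`, and the set to be counted is the sumset of
these intervals: the image in `F` of an integer interval with `∑ (q_i - 1) + 1` elements.
-/

section Fibers

variable {α β : Type*} {f : α → β} {s : Set β}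

lemma encard_preimage_eq_mul_of_encard_fiber_eq {k : ℕ∞} (hs : s.Finite)
    (hf : ∀ b ∈ s, (f ⁻¹' {b}).encard = k) : (f ⁻¹' s).encard = k * s.encard := by
  rw [← Set.biUnion_preimage_singleton,
    hs.encard_biUnion ((Set.pairwiseDisjoint_fiber f Set.univ).subset (Set.subset_univ s)),
    finsum_mem_congr rfl hf, finsum_mem_eq_finite_toFinset_sum _ hs, Finset.sum_const,
    nsmul_eq_mul, mul_comm, hs.encard_eq_coe_toFinset_card]

lemma image_preimage_diff_eq_of_encard_lt {t : Set α}
    (ht : ∀ b ∈ s, t.encard < (f ⁻¹' {b}).encard) : f '' (f ⁻¹' s \ t) = s := by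
  refine (Set.image_subset_iff.2 Set.sdiff_subset).antisymm fun b hb ↦ ?_
  obtain ⟨x, rfl, hxt⟩ :=
    Set.not_subset.1 fun hsub ↦ (ht b hb).not_ge (Set.encard_le_encard hsub)
  exact ⟨x, ⟨hb, hxt⟩, rfl⟩

lemma preimage_mul_singleton {G : Type*} [GroupWithZero G] {a : G} (ha : a ≠ 0) (f : α → G)
    (c : G) :
    (fun x ↦ a * f x) ⁻¹' {c} = f ⁻¹' {a⁻¹ * c} := by
  ext x
  simp [eq_inv_mul_iff_mul_eq₀ ha]

end Fibers

section RingChar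

variable {R : Type*} [NonAssocSemiring R]

lemma natCast_eq_zero_iff_prime_ringChar_and_dvd [NoZeroDivisors R] [Nontrivial R] {k : ℕ}
    (hk : k ≠ 0) :
    (k : R) = 0 ↔ (ringChar R).Prime ∧ ringChar R ∣ k := by
  rw [ringChar.spec, iff_and_self]
  intro hdvd
  exact (CharP.char_is_prime_or_zero R (ringChar R)).resolve_right (ne_zero_of_dvd_ne_zero hk hdvd)

lemma image_natCast_Iio_eq_of_ringChar_le (h0 : ringChar R ≠ 0) {m : ℕ} (hm : ringChar R ≤ m) :
    (Nat.cast '' Set.Iio m : Set R) = Nat.cast '' Set.Iio (ringChar R) := by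
  refine Set.Subset.antisymm ?_ (Set.image_mono (Set.Iio_subset_Iio hm))
  rintro _ ⟨j, -, rfl⟩
  exact ⟨j % ringChar R, Nat.mod_lt _ (Nat.pos_of_ne_zero h0),
    (CharP.cast_eq_mod R (ringChar R) j).symm⟩

end RingChar

section SepClosed

open Polynomial

variable {F : Type*} [Field F] [IsSepClosed F]

lemma encard_eval_fiber_of_separable {P : F[X]} {c : F}
    (hP : (P - C c).Separable) : ((fun x ↦ P.eval x) ⁻¹' {c}).encard = P.natDegree := by
  have hroots : (fun x ↦ P.eval x) ⁻¹' {c} = (P - C c).rootSet F := by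
    ext x
    simp [mem_rootSet_of_ne hP.ne_zero, sub_eq_zero]
  rw [hroots, Set.encard_eq_coe_toFinset_card, Set.toFinset_card,
    card_rootSet_eq_natDegree hP (by simpa using IsSepClosed.splits_of_separable _ hP),
    natDegree_sub_C]

lemma encard_pow_fiber {k : ℕ} (hk : (k : F) ≠ 0) {c : F} (hc : c ≠ 0) :
    ((fun x : F ↦ x ^ k) ⁻¹' {c}).encard = k := by
  simpa using encard_eval_fiber_of_separable (separable_X_pow_sub_C c hk hc)

lemma encard_pow_sub_self_fiber {k : ℕ} (hk : k ≠ 0) (hkF : (k : F) = 0) (c : F) :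
    ((fun x : F ↦ x ^ k - x) ⁻¹' {c}).encard = k := by
  have hk1 : k ≠ 1 := by
    rintro rfl
    exact one_ne_zero (Nat.cast_one.symm.trans hkF)
  have hsep : (X ^ k - X - C c : F[X]).Separable := ⟨0, -1, by simp [derivative_X_pow, hkF]⟩
  simpa [FiniteField.X_pow_card_sub_X_natDegree_eq F (show 1 < k by omega)] using
    encard_eval_fiber_of_separable hsep

lemma encard_ite_pow_sub_self_fiber {k : ℕ} (hk : k ≠ 0) {c : F} (hc : c ≠ 0) :
    ((if (ringChar F).Prime ∧ ringChar F ∣ k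
      then (fun x : F ↦ x ^ k - x) else (fun x : F ↦ x ^ k)) ⁻¹' {c}).encard = k := by
  split_ifs with hkF <;> rw [← natCast_eq_zero_iff_prime_ringChar_and_dvd hk] at hkF
  · exact encard_pow_sub_self_fiber hk hkF c
  · exact encard_pow_fiber hkF hc

end SepClosed

section Characteristic

variable {F : Type*} [Field F]

lemma natCast_injOn_Iio_of_le_fieldCharE {m : ℕ} (hm : (m : ℕ∞) ≤ fieldCharE F) :
    Set.InjOn (Nat.cast : ℕ → F) (Set.Iio m) := by
  unfold fieldCharE at hm
  split_ifs at hm with h0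
  · have : CharP F 0 := ringChar.of_eq h0
    have := CharP.charP_to_charZero F
    exact Nat.cast_injective.injOn
  · exact (CharP.natCast_injOn_Iio F (ringChar F)).mono (Set.Iio_subset_Iio (by exact_mod_cast hm))

lemma natCast_injOn_Iic_of_lt_fieldCharE {m : ℕ} (hm : (m : ℕ∞) < fieldCharE F) :
    Set.InjOn (Nat.cast : ℕ → F) (Set.Iic m) := by
  rw [← Set.Iio_add_one_eq_Iic]
  exact natCast_injOn_Iio_of_le_fieldCharE (by exact_mod_cast Order.add_one_le_of_lt hm)

lemma zero_notMem_image_natCast_Icc {m : ℕ} (hm : (m : ℕ∞) < fieldCharE F) :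
    (0 : F) ∉ Nat.cast '' Set.Icc 1 m := by
  rintro ⟨j, hj, hj0⟩
  have : j = 0 :=
    natCast_injOn_Iic_of_lt_fieldCharE hm hj.2 m.zero_le (hj0.trans Nat.cast_zero.symm)
  exact absurd hj.1 (by omega)

lemma encard_image_natCast_Iio (m : ℕ) :
    (Nat.cast '' Set.Iio m : Set F).encard = min (fieldCharE F) m := by
  have encard_of_le {l : ℕ} (hl : (l : ℕ∞) ≤ fieldCharE F) :
      (Nat.cast '' Set.Iio l : Set F).encard = l := by
    rw [(natCast_injOn_Iio_of_le_fieldCharE hl).encard_image, ← Finset.coe_Iio,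
      Set.encard_coe_eq_coe_finsetCard, Nat.card_Iio]
  rcases le_or_gt (m : ℕ∞) (fieldCharE F) with hm | hm
  · rw [encard_of_le hm, min_eq_right hm]
  · have h0 : ringChar F ≠ 0 := fun h0 ↦ by simp [fieldCharE, h0] at hm
    have hchar : fieldCharE F = ringChar F := if_neg h0
    rw [min_eq_left hm.le, hchar,
      image_natCast_Iio_eq_of_ringChar_le h0 (by rw [hchar] at hm; exact_mod_cast hm.le),
      encard_of_le hchar.ge]

lemma encard_image_natCast_Icc_add (m l : ℕ) :
    (Nat.cast '' Set.Icc m (m + l) : Set F).encard = min (fieldCharE F) (l + 1 : ℕ) := by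
  have htranslate : Set.Icc m (m + l) = (m + ·) '' Set.Iio (l + 1) := by
    rw [Set.Iio_add_one_eq_Iic, ← Set.Icc_bot, Nat.bot_eq_zero, Set.image_const_add_Icc, add_zero]
  have hcast : (Nat.cast '' Set.Icc m (m + l) : Set F) =
      ((m : F) + ·) '' (Nat.cast '' Set.Iio (l + 1)) := by
    simp only [htranslate, Set.image_image, Nat.cast_add]
  rw [hcast, (add_right_injective _).encard_image, encard_image_natCast_Iio]

end Characteristic

section Sumset

open scoped Pointwise

lemma finsetSum_Icc {ι M : Type*} [AddCommMonoid M] [LinearOrder M] [IsOrderedAddMonoid M]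
    [AddLeftReflectLE M] [ExistsAddOfLE M] (s : Finset ι) {l u : ι → M}
    (h : ∀ i ∈ s, l i ≤ u i) :
    ∑ i ∈ s, Set.Icc (l i) (u i) = Set.Icc (∑ i ∈ s, l i) (∑ i ∈ s, u i) := by
  induction s using Finset.cons_induction with
  | empty => simp [Set.singleton_zero]
  | cons i s hi ih =>
    rw [Finset.forall_mem_cons] at h
    simp only [Finset.sum_cons, ih h.2, Set.Icc_add_Icc h.1 (Finset.sum_le_sum h.2)]

lemma setOf_exists_sum_eq {ι M : Type*} [Fintype ι] [AddCommMonoid M] {X : ι → Type*}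
    (g : ∀ i, X i → M) (A : ∀ i, Set (X i)) :
    {y | ∃ x : ∀ i, X i, (∀ i, x i ∈ A i) ∧ ∑ i, g i (x i) = y} = ∑ i, g i '' A i := by
  ext y
  rw [Set.mem_fintype_sum]
  constructor
  · rintro ⟨x, hx, rfl⟩
    exact ⟨fun i ↦ g i (x i), fun i ↦ Set.mem_image_of_mem _ (hx i), rfl⟩
  · rintro ⟨z, hz, rfl⟩
    choose x hx hxz using hz
    exact ⟨x, hx, Finset.sum_congr rfl fun i _ ↦ hxz i⟩

lemma encard_setOf_exists_sum_eq_of_image_eq_natCast_Icc {ι F : Type*} [Fintype ι] [Field F]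
    {X : ι → Type*} {g : ∀ i, X i → F} {A : ∀ i, Set (X i)} {q : ι → ℕ} (hq : ∀ i, 0 < q i)
    (hg : ∀ i, g i '' A i = Nat.cast '' Set.Icc 1 (q i)) :
    {y | ∃ x : ∀ i, X i, (∀ i, x i ∈ A i) ∧ ∑ i, g i (x i) = y}.encard =
      min (fieldCharE F) (∑ i, (q i - 1) + 1 : ℕ) := by
  have hsum : ∑ i, q i = ∑ _i : ι, 1 + ∑ i, (q i - 1) := by
    rw [← Finset.sum_add_distrib]
    exact Finset.sum_congr rfl fun i _ ↦ (Nat.add_sub_of_le (hq i)).symm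
  calc {y | ∃ x : ∀ i, X i, (∀ i, x i ∈ A i) ∧ ∑ i, g i (x i) = y}.encard
      = (∑ i, Nat.castAddMonoidHom F '' Set.Icc 1 (q i)).encard := by
        simp only [setOf_exists_sum_eq, hg, Nat.coe_castAddMonoidHom]
    _ = (Nat.cast '' Set.Icc (∑ _i : ι, 1) (∑ i, q i) : Set F).encard := by
        rw [← Set.image_finsetSum, finsetSum_Icc _ fun i _ ↦ hq i, Nat.coe_castAddMonoidHom]
    _ = min (fieldCharE F) (∑ i, (q i - 1) + 1 : ℕ) := by
        rw [hsum, encard_image_natCast_Icc_add]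

end Sumset

section Multiples

variable {F X : Type*} [Field F]

lemma setOf_exists_eq_natCast_mul_inv {a : F} (ha : a ≠ 0) (f : X → F) (q : ℕ) :
    {x | ∃ j : ℕ, 1 ≤ j ∧ j ≤ q ∧ f x = (j : F) * a⁻¹} =
      (fun x ↦ a * f x) ⁻¹' (Nat.cast '' Set.Icc 1 q) := by
  ext x
  simp [eq_mul_inv_iff_mul_eq₀ ha, mul_comm a, and_assoc, eq_comm]

lemma encard_preimage_natCast_Icc {k : ℕ} {g : X → F} (hg : ∀ c ≠ 0, (g ⁻¹' {c}).encard = k)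
    {q : ℕ} (hq : (q : ℕ∞) < fieldCharE F) :
    (g ⁻¹' (Nat.cast '' Set.Icc 1 q)).encard = (k * q : ℕ) := by
  have hinj : Set.InjOn (Nat.cast : ℕ → F) (Set.Icc 1 q) :=
    (natCast_injOn_Iic_of_lt_fieldCharE hq).mono Set.Icc_subset_Iic_self
  rw [encard_preimage_eq_mul_of_encard_fiber_eq ((Set.finite_Icc 1 q).image _)
      fun c hc ↦ hg c (ne_of_mem_of_not_mem hc (zero_notMem_image_natCast_Icc hq)),
    hinj.encard_image, ← Finset.coe_Icc, Set.encard_coe_eq_coe_finsetCard, Nat.card_Icc,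
    Nat.add_sub_cancel, Nat.cast_mul]

end Multiples

lemma mul_sub_sub_one_div {k q r : ℕ} (hr : r < k) (hq : 0 < q) : (k * q - r - 1) / k = q - 1 := by
  rw [Nat.sub_sub, Nat.mul_sub_div _ _ _ (hr.trans_le (Nat.le_mul_of_pos_right k hq)),
    Nat.div_eq_of_lt hr]

theorem stmt10_general {F X ι : Type*} [Field F] [Fintype ι] {k : ℕ} {f : X → F}
    (hf : ∀ c ≠ 0, (f ⁻¹' {c}).encard = k) {a : ι → F} (ha : ∀ i, a i ≠ 0) {q : ι → ℕ}
    (hq : ∀ i, 0 < q i) (hqp : ∀ i, (q i : ℕ∞) < fieldCharE F) {R : ι → Set X}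
    (hR : ∀ i, R i ⊆ {x | ∃ j : ℕ, 1 ≤ j ∧ j ≤ q i ∧ f x = (j : F) * (a i)⁻¹})
    (hRk : ∀ i, (R i).ncard < k) {A : ι → Set X}
    (hA : ∀ i, A i = {x | ∃ j : ℕ, 1 ≤ j ∧ j ≤ q i ∧ f x = (j : F) * (a i)⁻¹} \ R i) :
    (∀ i, (A i).ncard = k * q i - (R i).ncard) ∧
    (∀ i, ((A i).ncard - 1) / k = q i - 1) ∧
    ({y | ∃ x : ι → X, (∀ i, x i ∈ A i) ∧ ∑ i, a i * f (x i) = y}.ncard : ℕ∞) =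
      min (fieldCharE F) (∑ i, ((A i).ncard - 1) / k + 1 : ℕ) := by
  simp only [setOf_exists_eq_natCast_mul_inv (ha _)] at hR hA
  have hfiber (i : ι) (c : F) (hc : c ≠ 0) : ((fun x ↦ a i * f x) ⁻¹' {c}).encard = k := by
    rw [preimage_mul_singleton (ha i), hf _ (mul_ne_zero (inv_ne_zero (ha i)) hc)]
  have hunion (i : ι) := encard_preimage_natCast_Icc (hfiber i) (hqp i)
  have hRfin (i : ι) : (R i).Finite := (Set.finite_of_encard_eq_coe (hunion i)).subset (hR i)
  have hcard (i : ι) : (A i).ncard = k * q i - (R i).ncard := by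
    rw [hA, Set.ncard_sdiff (hR i) (hRfin i), Set.ncard_def, hunion, ENat.toNat_natCast]
  have hfloor (i : ι) : ((A i).ncard - 1) / k = q i - 1 := by
    rw [hcard, mul_sub_sub_one_div (hRk i) (hq i)]
  have himage (i : ι) : (fun x ↦ a i * f x) '' A i = Nat.cast '' Set.Icc 1 (q i) := by
    rw [hA]
    refine image_preimage_diff_eq_of_encard_lt fun c hc ↦ ?_
    rw [hfiber i c (ne_of_mem_of_not_mem hc (zero_notMem_image_natCast_Icc (hqp i))),
      ← (hRfin i).cast_ncard_eq]
    exact_mod_cast hRk i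
  have hsum := encard_setOf_exists_sum_eq_of_image_eq_natCast_Icc hq himage
  refine ⟨hcard, hfloor, ?_⟩
  rw [Finset.sum_congr rfl fun i _ ↦ hfloor i, ← hsum]
  refine (Set.encard_ne_top_iff.1 ?_).cast_ncard_eq
  simp [hsum]

theorem stmt10 {F : Type*} [Field F] [IsAlgClosed F] (n k : ℕ) (hk : 0 < k)
    (a : Fin n → F) (ha : ∀ i, a i ≠ 0)
    (fk : F → F)
    (hfk : fk = if (ringChar F).Prime ∧ ringChar F ∣ k
      then (fun x : F => x ^ k - x) else (fun x : F => x ^ k))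
    (q : Fin n → ℕ) (hq : ∀ i, 0 < q i) (hqp : ∀ i, (q i : ℕ∞) < fieldCharE F)
    (r : Fin n → ℕ) (hrk : ∀ i, r i ≤ k - 1)
    (R : Fin n → Set F) (hRfin : ∀ i, (R i).Finite)
    (hRsub : ∀ i, R i ⊆ {x : F | fk x = (q i : F) * (a i)⁻¹})
    (hRcard : ∀ i, (R i).ncard = r i)
    (A : Fin n → Set F)
    (hA : ∀ i, A i = {x : F | ∃ j : ℕ, 1 ≤ j ∧ j ≤ q i ∧ fk x = (j : F) * (a i)⁻¹} \ R i) :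
    (∀ i, (A i).ncard = k * q i - r i) ∧
    (∀ i, ((A i).ncard - 1) / k = q i - 1) ∧
    (({y | ∃ x : Fin n → F, (∀ i, x i ∈ A i) ∧ ∑ i, a i * fk (x i) = y} : Set F).ncard : ℕ∞)
      = min (fieldCharE F) (((∑ i, ((A i).ncard - 1) / k : ℕ) + 1 : ℕ)) := by
  simpa only [hRcard] using stmt10_general
    (fun c hc ↦ hfk ▸ encard_ite_pow_sub_self_fiber hk.ne' hc) ha hq hqp
    (fun i x hx ↦ ⟨q i, hq i, le_rfl, hRsub i hx⟩)
    (fun i ↦ (hRcard i).trans_lt (Nat.lt_of_le_pred hk (hrk i))) hA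
end

section
/- Let F be an algebraically closed field, let a_1,...,a_n be nonzero elements of F, let k ≥ n be a positive integer, and let q_1,...,q_n be positive integers with each q_i < p(F). Define f_k(x) = x^k - x if the characteristic of F is a prime dividing k, and f_k(x) = x^k otherwise, and let e denote the multiplicative identity of F. For each i = 1,...,n, let S_i be a subset of {x ∈ F : f_k(x) = a_i^{-1}} with |S_i| ≥ i, and set A_i = S_i ∪ {x ∈ F : f_k(x) ∈ {(j·e)·a_i^{-1} : 1 < j ≤ q_i}}. Then |A_i| = k(q_i - 1) + |S_i| and ⌊(|A_i|-i)/k⌋ = q_i - 1 for each i, and |{a_1 f_k(x_1) + ... + a_n f_k(x_n) : x_1 ∈ A_1, ..., x_n ∈ A_n, and x_i ≠ x_j whenever i ≠ j}| = min{p(F), ⌊(|A_1|-1)/k⌋ + ⌊(|A_2|-2)/k⌋ + ... + ⌊(|A_n|-n)/k⌋ + 1}; in particular the lower bound of Theorem 1.2 is attained. -/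
open scoped Classical

/-!
Put `g i x = a i * f_k x`. Both `X ^ k - c` (for `k ≠ 0` in `F`, `c ≠ 0`) and `X ^ k - X - c`
(for `k = 0` in `F`) are separable, so each fibre of `g i` over `1, ..., q i` has exactly `k`
points, and `A i` consists of these fibres with the one over `1` cut down to `S i`. This gives the
size of `A i`. On `A i` each value of `g i` is taken at least `i` times, so by Hall's theorem every
choice of values can be realised at distinct points: the restriction `x i ≠ x j` costs nothing, and
the value set is the full sumset of the `{1, ..., q i}`, namely the image in `F` of the interval
`[n, ∑ q i]`.
-/

open Set Polynomial
open scoped Pointwise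

/-- The function `f_k` of the paper: `x ^ k`, corrected to `x ^ k - x` when the characteristic
is a prime dividing `k`, so that `f_k - c` is separable of degree `k` for all `c ≠ 0`. -/
noncomputable def separablePow (F : Type*) [Field F] (k : ℕ) : F → F :=
  if (ringChar F).Prime ∧ ringChar F ∣ k then fun x => x ^ k - x else fun x => x ^ k

section Fibers

variable {F : Type*} [Field F] [IsSepClosed F]

theorem encard_setOf_eval_eq_zero {P : F[X]} (hP : P.Separable) :
    {x | P.eval x = 0}.encard = P.natDegree := by
  have hroots : {x | P.eval x = 0} = (P.roots.toFinset : Set F) := by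
    ext x
    simp [hP.ne_zero]
  rw [hroots, encard_coe_eq_coe_finsetCard, Multiset.toFinset_card_of_nodup (nodup_roots hP),
    ← (IsSepClosed.splits_of_separable P hP).natDegree_eq_card_roots]

theorem encard_setOf_pow_eq {k : ℕ} (hk : (k : F) ≠ 0) {c : F} (hc : c ≠ 0) :
    {x : F | x ^ k = c}.encard = k := by
  simpa [sub_eq_zero] using encard_setOf_eval_eq_zero (separable_X_pow_sub_C c hk hc)

theorem encard_setOf_pow_sub_self_eq {k : ℕ} (hk : 0 < k) (hkF : (k : F) = 0) (c : F) :
    {x : F | x ^ k - x = c}.encard = k := by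
  have hk1 : k ≠ 1 := by
    rintro rfl
    simp at hkF
  have hdeg : (X ^ k - X - C c : F[X]).natDegree = k := by
    compute_degree!
    simp [hk.ne', hk1.symm]
  have hderiv : derivative (X ^ k - X - C c : F[X]) = -1 := by simp [derivative_X_pow, hkF]
  have hsep : (X ^ k - X - C c : F[X]).Separable := by
    rw [separable_def, hderiv]
    exact isCoprime_one_right.neg_right
  simpa [sub_eq_zero, hdeg] using encard_setOf_eval_eq_zero hsep

theorem encard_setOf_separablePow_eq {k : ℕ} (hk : 0 < k) {c : F} (hc : c ≠ 0) :
    {x | separablePow F k x = c}.encard = k := by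
  unfold separablePow
  split_ifs with h
  · exact encard_setOf_pow_sub_self_eq hk ((ringChar.spec F k).2 h.2) c
  · refine encard_setOf_pow_eq (fun hkF => h ?_) hc
    have hdvd : ringChar F ∣ k := (ringChar.spec F k).1 hkF
    refine ⟨(CharP.char_is_prime_or_zero F (ringChar F)).resolve_right fun h0 => ?_, hdvd⟩
    exact hk.ne' (zero_dvd_iff.1 (h0 ▸ hdvd))

theorem encard_fiber_mul_separablePow {k : ℕ} (hk : 0 < k) {a y : F} (ha : a ≠ 0) (hy : y ≠ 0) :
    ((fun x => a * separablePow F k x) ⁻¹' {y}).encard = k := by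
  rw [← encard_setOf_separablePow_eq hk (mul_ne_zero (inv_ne_zero ha) hy)]
  congr 1 with x
  exact (eq_inv_mul_iff_mul_eq₀ ha).symm

end Fibers

theorem natCast_image_Iio_eq_of_charP_le {R : Type*} [AddMonoidWithOne R] {p : ℕ} [CharP R p]
    (hp : p ≠ 0) {N : ℕ} (hN : p ≤ N) : (Nat.cast '' Iio N : Set R) = Nat.cast '' Iio p := by
  refine (image_subset_iff.2 fun m _ => ?_).antisymm (image_mono (Iio_subset_Iio hN))
  exact ⟨m % p, Nat.mod_lt _ (Nat.pos_of_ne_zero hp), (CharP.natCast_eq_natCast_mod R p m).symm⟩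

section Characteristic

variable {F : Type*} [Field F]

theorem natCast_injOn_Iio_of_le_fieldCharE_s11 {N : ℕ} (hN : (N : ℕ∞) ≤ fieldCharE F) :
    InjOn (Nat.cast : ℕ → F) (Iio N) := by
  unfold fieldCharE at hN
  split_ifs at hN with h
  · have : CharP F 0 := h ▸ ringChar.charP F
    have : CharZero F := CharP.charP_to_charZero F
    exact Nat.cast_injective.injOn
  · exact (CharP.natCast_injOn_Iio F (ringChar F)).mono (Iio_subset_Iio (by exact_mod_cast hN))

theorem natCast_ne_zero_of_lt_fieldCharE {m : ℕ} (hm0 : m ≠ 0) (hm : (m : ℕ∞) < fieldCharE F) :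
    (m : F) ≠ 0 := by
  have hinj : InjOn (Nat.cast : ℕ → F) (Iio (m + 1)) :=
    natCast_injOn_Iio_of_le_fieldCharE_s11 (by exact_mod_cast Order.add_one_le_of_lt hm)
  exact fun h => hm0 (hinj (Nat.lt_succ_self m) m.succ_pos (by simpa using h))

theorem encard_natCast_image_Iio (N : ℕ) :
    (Nat.cast '' Iio N : Set F).encard = min (fieldCharE F) N := by
  have encard_of_le {M : ℕ} (hM : (M : ℕ∞) ≤ fieldCharE F) :
      (Nat.cast '' Iio M : Set F).encard = M := by
    rw [(natCast_injOn_Iio_of_le_fieldCharE_s11 hM).encard_image, ← Finset.coe_Iio,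
      encard_coe_eq_coe_finsetCard, Nat.card_Iio]
  rcases le_total (N : ℕ∞) (fieldCharE F) with hN | hN
  · rw [min_eq_right hN, encard_of_le hN]
  · rw [min_eq_left hN]
    have h0 : ringChar F ≠ 0 := fun h0 => by simp [fieldCharE, h0] at hN
    have hp : fieldCharE F = ringChar F := if_neg h0
    rw [natCast_image_Iio_eq_of_charP_le h0 (by exact_mod_cast hp ▸ hN), encard_of_le hp.ge, hp]

theorem encard_natCast_image_Icc (m N : ℕ) :
    (Nat.cast '' Icc m (m + N) : Set F).encard = min (fieldCharE F) (N + 1 : ℕ) := by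
  have htranslate : Icc m (m + N) = (m + ·) '' Iio (N + 1) := by
    ext x
    simp only [mem_Icc, mem_image, mem_Iio]
    exact ⟨fun h => ⟨x - m, by omega, by omega⟩, by rintro ⟨y, hy, rfl⟩; omega⟩
  have hcast :
      (Nat.cast '' Icc m (m + N) : Set F) = ((m : F) + ·) '' (Nat.cast '' Iio (N + 1)) := by
    simp only [htranslate, image_image, Nat.cast_add]
  rw [hcast, (add_right_injective (m : F)).encard_image, encard_natCast_image_Iio]

end Characteristic

theorem exists_injective_forall_mem_of_card_Iic_le_encard {ι α : Type*} [LinearOrder ι]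
    [LocallyFiniteOrderBot ι] {B : ι → Set α}
    (hB : ∀ i, ((Finset.Iic i).card : ℕ∞) ≤ (B i).encard) :
    ∃ x : ι → α, Function.Injective x ∧ ∀ i, x i ∈ B i := by
  have exists_finset (i : ι) : ∃ T : Finset α, ↑T ⊆ B i ∧ T.card = (Finset.Iic i).card := by
    obtain ⟨T, hTB, hT⟩ := exists_subset_encard_eq (hB i)
    lift T to Finset α using finite_of_encard_eq_coe hT
    exact ⟨T, hTB, by simpa using hT⟩
  choose T hTB hT using exists_finset
  obtain ⟨x, hx, hxT⟩ := (Finset.all_card_le_biUnion_card_iff_exists_injective T).1 fun s => by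
    rcases s.eq_empty_or_nonempty with rfl | hs
    · simp
    calc s.card ≤ (Finset.Iic (s.max' hs)).card :=
          Finset.card_le_card fun i hi => Finset.mem_Iic.2 (s.le_max' i hi)
      _ = (T (s.max' hs)).card := (hT _).symm
      _ ≤ (s.biUnion T).card :=
          Finset.card_le_card (Finset.subset_biUnion_of_mem T (s.max'_mem hs))
  exact ⟨x, hx, fun i => hTB i (hxT i)⟩

theorem sum_Icc_eq_Icc_sum {ι M : Type*} [AddCommMonoid M] [LinearOrder M]
    [IsOrderedCancelAddMonoid M] [ExistsAddOfLE M] (s : Finset ι) {l u : ι → M}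
    (h : ∀ i ∈ s, l i ≤ u i) :
    ∑ i ∈ s, Icc (l i) (u i) = Icc (∑ i ∈ s, l i) (∑ i ∈ s, u i) := by
  induction s using Finset.cons_induction with
  | empty => simp [singleton_zero]
  | cons i s hi ih =>
    have hs : ∀ j ∈ s, l j ≤ u j := fun j hj => h j (Finset.mem_cons_of_mem hj)
    simp only [Finset.sum_cons, ih hs]
    exact Icc_add_Icc (h i (Finset.mem_cons_self i s)) (Finset.sum_le_sum hs)

/-- The value set of `∑ i, g i (x i)` under the restriction that the `x i ∈ A i` are pairwise
distinct; the theorem computes its size for `g i = a i * f_k`. -/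
def restrictedValueSet {ι α R : Type*} [Fintype ι] [AddCommMonoid R] (g : ι → α → R)
    (A : ι → Set α) : Set R :=
  {y | ∃ x : ι → α, (∀ i, x i ∈ A i) ∧ Function.Injective x ∧ ∑ i, g i (x i) = y}

theorem restrictedValueSet_eq_sum_image {ι α R : Type*} [Fintype ι] [LinearOrder ι]
    [LocallyFiniteOrderBot ι] [AddCommMonoid R] {g : ι → α → R} {A : ι → Set α}
    (hfib : ∀ i, ∀ y ∈ g i '' A i,
      ((Finset.Iic i).card : ℕ∞) ≤ (A i ∩ g i ⁻¹' {y}).encard) :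
    restrictedValueSet g A = ∑ i, g i '' A i := by
  ext y
  rw [mem_fintype_sum]
  constructor
  · rintro ⟨x, hxA, -, rfl⟩
    exact ⟨fun i => g i (x i), fun i => mem_image_of_mem _ (hxA i), rfl⟩
  · rintro ⟨v, hv, rfl⟩
    obtain ⟨x, hx, hxv⟩ :=
      exists_injective_forall_mem_of_card_Iic_le_encard fun i => hfib i (v i) (hv i)
    exact ⟨x, fun i => (hxv i).1, hx, Finset.sum_congr rfl fun i _ => (hxv i).2⟩

/-- The sets `A_i` of the theorem, for `g = a_i f_k`: the set `S`, meant to lie in the fibre of `g`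
over `1`, together with the full fibres of `g` over `2, ..., q`. -/
def withHigherFibers {α R : Type*} [NatCast R] (g : α → R) (S : Set α) (q : ℕ) : Set α :=
  S ∪ {x | ∃ j : ℕ, 1 < j ∧ j ≤ q ∧ g x = j}

theorem withHigherFibers_succ {α R : Type*} [NatCast R] {g : α → R} {S : Set α} {q : ℕ}
    (hq : 0 < q) :
    withHigherFibers g S (q + 1) = withHigherFibers g S q ∪ g ⁻¹' {((q + 1 : ℕ) : R)} := by
  ext x
  simp only [withHigherFibers, union_assoc, mem_union, mem_ofPred_eq, mem_preimage,
    mem_singleton_iff]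
  refine or_congr_right ⟨?_, ?_⟩
  · rintro ⟨j, h1j, hjq, hj⟩
    rcases hjq.lt_or_eq with hlt | rfl
    · exact Or.inl ⟨j, h1j, Nat.lt_succ_iff.1 hlt, hj⟩
    · exact Or.inr hj
  · rintro (⟨j, h1j, hjq, hj⟩ | hj)
    · exact ⟨j, h1j, hjq.trans q.le_succ, hj⟩
    · exact ⟨q + 1, by omega, le_rfl, hj⟩

section WithHigherFibers

variable {α R : Type*} [AddMonoidWithOne R] {g : α → R} {S : Set α} {q : ℕ}

theorem exists_natCast_eq_of_mem_withHigherFibers (hS : S ⊆ g ⁻¹' {1}) (hq : 0 < q) {x : α}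
    (hx : x ∈ withHigherFibers g S q) : ∃ j ∈ Icc 1 q, (j : R) = g x := by
  rcases hx with hx | ⟨j, h1j, hjq, hj⟩
  · exact ⟨1, ⟨le_rfl, hq⟩, by simpa using (hS hx).symm⟩
  · exact ⟨j, ⟨h1j.le, hjq⟩, hj.symm⟩

theorem encard_withHigherFibers {k : ℕ∞} (hS : S ⊆ g ⁻¹' {1}) (hq : 0 < q)
    (hinj : InjOn (Nat.cast : ℕ → R) (Icc 1 q))
    (hfib : ∀ j ∈ Ioc 1 q, (g ⁻¹' {(j : R)}).encard = k) :
    (withHigherFibers g S q).encard = k * (q - 1 : ℕ) + S.encard := by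
  induction q, hq using Nat.le_induction with
  | base =>
    have hbase : withHigherFibers g S 1 = S :=
      union_eq_self_of_subset_right fun x ⟨j, h1j, hj1, _⟩ => absurd hj1 h1j.not_ge
    simp [hbase]
  | succ q hq ih =>
    have hdisj : Disjoint (withHigherFibers g S q) (g ⁻¹' {((q + 1 : ℕ) : R)}) := by
      refine Set.disjoint_left.2 fun x hx hxq => ?_
      obtain ⟨j, ⟨h1j, hjq⟩, hj⟩ := exists_natCast_eq_of_mem_withHigherFibers hS hq hx
      have := hinj ⟨h1j, hjq.trans q.le_succ⟩ ⟨by omega, le_rfl⟩ (hj.trans hxq)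
      omega
    rw [withHigherFibers_succ hq, encard_union_eq hdisj,
      ih (hinj.mono (Icc_subset_Icc_right q.le_succ))
        fun j hj => hfib j (Ioc_subset_Ioc_right q.le_succ hj),
      hfib (q + 1) ⟨by omega, le_rfl⟩, Nat.add_sub_cancel]
    obtain ⟨r, rfl⟩ := Nat.exists_eq_add_of_le' hq
    push_cast [Nat.add_sub_cancel]
    ring

theorem le_encard_withHigherFibers_inter_fiber {c : ℕ∞} (hS : S ⊆ g ⁻¹' {1}) (hSc : c ≤ S.encard)
    (hfib : ∀ j ∈ Ioc 1 q, c ≤ (g ⁻¹' {(j : R)}).encard) {j : ℕ} (hj : j ∈ Icc 1 q) :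
    c ≤ (withHigherFibers g S q ∩ g ⁻¹' {(j : R)}).encard := by
  rcases hj.1.eq_or_lt with rfl | h1j
  · refine hSc.trans (encard_le_encard (subset_inter subset_union_left ?_))
    simpa using hS
  · refine (hfib j ⟨h1j, hj.2⟩).trans (encard_le_encard (subset_inter ?_ subset_rfl))
    exact fun x hx => Or.inr ⟨j, h1j, hj.2, hx⟩

theorem image_withHigherFibers (hS : S ⊆ g ⁻¹' {1}) (hSne : S.Nonempty) (hq : 0 < q)
    (hfib : ∀ j ∈ Ioc 1 q, (g ⁻¹' {(j : R)}).Nonempty) :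
    g '' withHigherFibers g S q = Nat.cast '' Icc 1 q := by
  refine Subset.antisymm (image_subset_iff.2 fun x hx =>
    exists_natCast_eq_of_mem_withHigherFibers hS hq hx) (image_subset_iff.2 fun j hj => ?_)
  obtain ⟨x, hxA, hxj⟩ := one_le_encard_iff_nonempty.1 <|
    le_encard_withHigherFibers_inter_fiber hS (one_le_encard_iff_nonempty.2 hSne)
      (fun j hj => one_le_encard_iff_nonempty.2 (hfib j hj)) hj
  exact ⟨x, hxA, hxj⟩

end WithHigherFibers

theorem restrictedValueSet_withHigherFibers {ι α R : Type*} [AddCommMonoidWithOne R] [Fintype ι]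
    [LinearOrder ι] [LocallyFiniteOrderBot ι] {g : ι → α → R} {S : ι → Set α} {q : ι → ℕ}
    (hS : ∀ i, S i ⊆ g i ⁻¹' {1}) (hq : ∀ i, 0 < q i)
    (hScard : ∀ i, ((Finset.Iic i).card : ℕ∞) ≤ (S i).encard)
    (hfib : ∀ i, ∀ j ∈ Ioc 1 (q i), ((Finset.Iic i).card : ℕ∞) ≤ (g i ⁻¹' {(j : R)}).encard) :
    restrictedValueSet g (fun i => withHigherFibers (g i) (S i) (q i))
      = Nat.cast '' Icc (Fintype.card ι) (∑ i, q i) := by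
  have hcard (i : ι) : 1 ≤ ((Finset.Iic i).card : ℕ∞) := by
    exact_mod_cast Finset.card_pos.2 ⟨i, Finset.mem_Iic.2 le_rfl⟩
  have himage (i : ι) : g i '' withHigherFibers (g i) (S i) (q i) = Nat.cast '' Icc 1 (q i) :=
    image_withHigherFibers (hS i) (one_le_encard_iff_nonempty.1 ((hcard i).trans (hScard i))) (hq i)
      fun j hj => one_le_encard_iff_nonempty.1 ((hcard i).trans (hfib i j hj))
  have hfiber : ∀ i, ∀ y ∈ g i '' withHigherFibers (g i) (S i) (q i),
      ((Finset.Iic i).card : ℕ∞) ≤ (withHigherFibers (g i) (S i) (q i) ∩ g i ⁻¹' {y}).encard := by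
    intro i y hy
    rw [himage] at hy
    obtain ⟨j, hj, rfl⟩ := hy
    exact le_encard_withHigherFibers_inter_fiber (hS i) (hScard i) (hfib i) hj
  calc restrictedValueSet g (fun i => withHigherFibers (g i) (S i) (q i))
      = ∑ i, g i '' withHigherFibers (g i) (S i) (q i) := restrictedValueSet_eq_sum_image hfiber
    _ = ∑ i, Nat.castAddMonoidHom R '' Icc 1 (q i) := Finset.sum_congr rfl fun i _ => himage i
    _ = Nat.castAddMonoidHom R '' Icc (∑ _i : ι, 1) (∑ i, q i) := by
        rw [← image_finsetSum, sum_Icc_eq_Icc_sum _ fun i _ => hq i]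
    _ = Nat.cast '' Icc (Fintype.card ι) (∑ i, q i) := by simp

section FullFibers

variable {α R : Type*} [AddMonoidWithOne R] {g : α → R} {S : Set α} {q k : ℕ}

theorem ncard_withHigherFibers (hS : S ⊆ g ⁻¹' {1}) (hq : 0 < q)
    (hinj : InjOn (Nat.cast : ℕ → R) (Icc 1 q))
    (hfib : ∀ j ∈ Icc 1 q, (g ⁻¹' {(j : R)}).encard = k) :
    (withHigherFibers g S q).ncard = k * (q - 1) + S.ncard := by
  have hSk : S.encard ≤ k :=
    (encard_le_encard hS).trans_eq (by simpa using hfib 1 ⟨le_rfl, hq⟩)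
  have hSfin : S.Finite := finite_of_encard_le_coe hSk
  have hA := encard_withHigherFibers hS hq hinj fun j hj => hfib j (Ioc_subset_Icc_self hj)
  rw [← hSfin.cast_ncard_eq] at hA
  rw [ncard_def, hA]
  norm_cast

theorem ncard_withHigherFibers_sub_div (hS : S ⊆ g ⁻¹' {1}) (hq : 0 < q)
    (hinj : InjOn (Nat.cast : ℕ → R) (Icc 1 q))
    (hfib : ∀ j ∈ Icc 1 q, (g ⁻¹' {(j : R)}).encard = k) {c : ℕ} (hc : 0 < c) (hcS : c ≤ S.ncard) :
    ((withHigherFibers g S q).ncard - c) / k = q - 1 := by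
  have hSk : S.ncard ≤ k := ENat.toNat_le_of_le_natCast <|
    (encard_le_encard hS).trans_eq (by simpa using hfib 1 ⟨le_rfl, hq⟩)
  rw [ncard_withHigherFibers hS hq hinj hfib, Nat.add_sub_assoc hcS,
    Nat.mul_add_div (by omega), Nat.div_eq_of_lt (by omega), add_zero]

end FullFibers

theorem cast_ncard_restrictedValueSet_withHigherFibers {α F : Type*} [Field F] {n k : ℕ}
    {g : Fin n → α → F} {S : Fin n → Set α} {q : Fin n → ℕ}
    (hS : ∀ i, S i ⊆ g i ⁻¹' {1}) (hq : ∀ i, 0 < q i)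
    (hScard : ∀ i : Fin n, (i : ℕ) + 1 ≤ (S i).ncard)
    (hfib : ∀ i, ∀ j ∈ Icc 1 (q i), (g i ⁻¹' {(j : F)}).encard = k) :
    ((restrictedValueSet g fun i => withHigherFibers (g i) (S i) (q i)).ncard : ℕ∞)
      = min (fieldCharE F) (∑ i, (q i - 1) + 1 : ℕ) := by
  have hSle (i : Fin n) : ((Finset.Iic i).card : ℕ∞) ≤ (S i).encard := by
    rw [Fin.card_Iic]
    exact (Nat.cast_le.2 (hScard i)).trans (ncard_le_encard _)
  have hSk (i : Fin n) : (S i).encard ≤ k :=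
    (encard_le_encard (hS i)).trans_eq (by simpa using hfib i 1 ⟨le_rfl, hq i⟩)
  have hvalues := restrictedValueSet_withHigherFibers hS hq hSle fun i j hj =>
    ((hSle i).trans (hSk i)).trans_eq (hfib i j (Ioc_subset_Icc_self hj)).symm
  have hsum : ∑ i, q i = n + ∑ i, (q i - 1) := by
    calc ∑ i, q i = ∑ i, (1 + (q i - 1)) :=
          Finset.sum_congr rfl fun i _ => (Nat.add_sub_of_le (hq i)).symm
      _ = n + ∑ i, (q i - 1) := by simp [Finset.sum_add_distrib]
  rw [hvalues, hsum, Fintype.card_fin, ← encard_natCast_image_Icc n,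
    ((finite_Icc _ _).image _).cast_ncard_eq]

theorem stmt11_general {F : Type*} [Field F] [IsSepClosed F] (n k : ℕ) (hk : 0 < k)
    (a : Fin n → F) (ha : ∀ i, a i ≠ 0)
    (fk : F → F)
    (hfk : fk = if (ringChar F).Prime ∧ ringChar F ∣ k
      then (fun x : F => x ^ k - x) else (fun x : F => x ^ k))
    (q : Fin n → ℕ) (hq : ∀ i, 0 < q i) (hqp : ∀ i, (q i : ℕ∞) < fieldCharE F)
    (S : Fin n → Set F) (hSsub : ∀ i, S i ⊆ {x : F | fk x = (a i)⁻¹})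
    (hScard : ∀ i : Fin n, (i : ℕ) + 1 ≤ (S i).ncard)
    (A : Fin n → Set F)
    (hA : ∀ i, A i = S i ∪ {x : F | ∃ j : ℕ, 1 < j ∧ j ≤ q i ∧ fk x = (j : F) * (a i)⁻¹}) :
    (∀ i, (A i).ncard = k * (q i - 1) + (S i).ncard) ∧
    (∀ i : Fin n, ((A i).ncard - ((i : ℕ) + 1)) / k = q i - 1) ∧
    (({y | ∃ x : Fin n → F, (∀ i, x i ∈ A i) ∧ Function.Injective x ∧
        ∑ i, a i * fk (x i) = y} : Set F).ncard : ℕ∞)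
      = min (fieldCharE F)
          (((∑ i : Fin n, ((A i).ncard - ((i : ℕ) + 1)) / k : ℕ) + 1 : ℕ)) := by
  obtain rfl : fk = separablePow F k := hfk
  let g (i : Fin n) (x : F) : F := a i * separablePow F k x
  obtain rfl : A = fun i => withHigherFibers (g i) (S i) (q i) := by
    funext i
    simp only [hA, withHigherFibers, g, eq_mul_inv_iff_mul_eq₀ (ha i), mul_comm (a i)]
  have hS (i : Fin n) : S i ⊆ g i ⁻¹' {1} := fun x hx =>
    (congrArg (a i * ·) (hSsub i hx)).trans (mul_inv_cancel₀ (ha i))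
  have hinj (i : Fin n) : InjOn (Nat.cast : ℕ → F) (Icc 1 (q i)) :=
    (natCast_injOn_Iio_of_le_fieldCharE_s11
      (by exact_mod_cast Order.add_one_le_of_lt (hqp i))).mono fun j hj => Nat.lt_succ_of_le hj.2
  have hfib (i : Fin n) (j : ℕ) (hj : j ∈ Icc 1 (q i)) : (g i ⁻¹' {(j : F)}).encard = k :=
    encard_fiber_mul_separablePow hk (ha i) <| natCast_ne_zero_of_lt_fieldCharE
      (Nat.one_le_iff_ne_zero.1 hj.1) ((Nat.cast_le.2 hj.2).trans_lt (hqp i))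
  have hfloor (i : Fin n) := ncard_withHigherFibers_sub_div (hS i) (hq i) (hinj i) (hfib i)
    i.val.succ_pos (hScard i)
  refine ⟨fun i => ncard_withHigherFibers (hS i) (hq i) (hinj i) (hfib i), hfloor, ?_⟩
  simp only [Finset.sum_congr rfl fun i _ => hfloor i]
  exact cast_ncard_restrictedValueSet_withHigherFibers hS hq hScard hfib

theorem stmt11 {F : Type*} [Field F] [IsAlgClosed F] (n k : ℕ) (hk : 0 < k) (hnk : n ≤ k)
    (a : Fin n → F) (ha : ∀ i, a i ≠ 0)
    (fk : F → F)
    (hfk : fk = if (ringChar F).Prime ∧ ringChar F ∣ k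
      then (fun x : F => x ^ k - x) else (fun x : F => x ^ k))
    (q : Fin n → ℕ) (hq : ∀ i, 0 < q i) (hqp : ∀ i, (q i : ℕ∞) < fieldCharE F)
    (S : Fin n → Set F) (hSfin : ∀ i, (S i).Finite)
    (hSsub : ∀ i, S i ⊆ {x : F | fk x = (a i)⁻¹})
    (hScard : ∀ i : Fin n, (i : ℕ) + 1 ≤ (S i).ncard)
    (A : Fin n → Set F)
    (hA : ∀ i, A i = S i ∪ {x : F | ∃ j : ℕ, 1 < j ∧ j ≤ q i ∧ fk x = (j : F) * (a i)⁻¹}) :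
    (∀ i, (A i).ncard = k * (q i - 1) + (S i).ncard) ∧
    (∀ i : Fin n, ((A i).ncard - ((i : ℕ) + 1)) / k = q i - 1) ∧
    (({y | ∃ x : Fin n → F, (∀ i, x i ∈ A i) ∧ Function.Injective x ∧
        ∑ i, a i * fk (x i) = y} : Set F).ncard : ℕ∞)
      = min (fieldCharE F)
          (((∑ i : Fin n, ((A i).ncard - ((i : ℕ) + 1)) / k : ℕ) + 1 : ℕ)) :=
  stmt11_general n k hk a ha fk hfk q hq hqp S hSsub hScard A hA
end

section
/- Let k and n be positive integers and q a nonnegative integer. In the field ℂ of complex numbers, let A = {z ∈ ℂ : z^k ∈ {1,...,q}} ∪ R, where R is a subset of {z ∈ ℂ : z^k = q+1} of cardinality r with 0 ≤ r < k. Suppose n ≥ k and |A| = kq + r ≥ n, and write n = k⌊n/k⌋ + s with s ∈ {0,1,...,k-1}. Then the restricted value set V = {x_1^k + ... + x_n^k : x_1,...,x_n ∈ A, and x_i ≠ x_j whenever i ≠ j} is a set of consecutive integers and |V| = 1 + ⌊n/k⌋(|A| - n) + s·⌊(|A|-n)/k⌋ + r if r < s, while |V| = 1 + ⌊n/k⌋(|A|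 - n) + s·⌊(|A|-n)/k⌋ if r ≥ s. -/
open scoped Classical

/-!
The `k`-th powers of the elements of `A`, with multiplicity and in increasing order, are the
numbers `⌊i / k⌋ + 1` for `0 ≤ i < |A|`: the fibres of `z ↦ z ^ k` have at most `k` elements, and
`|A|` is too large for any of them to have fewer.  If a nondecreasing sequence of integers has steps
at most `1`, then the sums of `n` of its terms fill the whole interval between the sum of the first
`n` and the sum of the last `n` terms.  With `D = |A| - n`, this interval has length
`∑ i < n, (⌊(D + i) / k⌋ - ⌊i / k⌋)`.  Each block of `k` consecutive indices contributes `D` by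
Hermite's identity, and the remaining `s` indices contribute `s ⌊D / k⌋` plus the number of carries
in base `k`.
-/

section RestrictedSums

variable {α β γ : Type*} [AddCommMonoid β] [AddCommMonoid γ]

/-- The restricted `n`-fold sums of a multiset `M`: the sums of the submultisets of `M` with `n`
elements.  An element may be used as often as it occurs in `M`, so that a sum of the values of a
function at distinct points of a finite set is a restricted sum of its multiset of values. -/
def restrictedSums (n : ℕ) (M : Multiset β) : Set β :=
  {y | ∃ T ∈ M.powersetCard n, T.sum = y}

theorem restrictedSums_zero (M : Multiset β) : restrictedSums 0 M = {0} := by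
  ext y
  simp [restrictedSums, eq_comm]

theorem restrictedSums_card (M : Multiset β) : restrictedSums M.card M = {M.sum} := by
  ext y
  simp [restrictedSums, eq_comm]

theorem restrictedSums_succ_cons (n : ℕ) (a : β) (M : Multiset β) :
    restrictedSums (n + 1) (a ::ₘ M) =
      restrictedSums (n + 1) M ∪ (a + ·) '' restrictedSums n M := by
  ext y
  simp only [restrictedSums, Multiset.powersetCard_cons, Multiset.mem_add, Multiset.mem_map,
    Set.mem_union, Set.mem_image, Set.mem_ofPred_eq]
  constructor
  · rintro ⟨_, hT | ⟨T, hT, rfl⟩, rfl⟩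
    · exact .inl ⟨_, hT, rfl⟩
    · exact .inr ⟨_, ⟨T, hT, rfl⟩, (Multiset.sum_cons a T).symm⟩
  · rintro (⟨T, hT, rfl⟩ | ⟨_, ⟨T, hT, rfl⟩, rfl⟩)
    · exact ⟨T, .inl hT, rfl⟩
    · exact ⟨a ::ₘ T, .inr ⟨T, hT, rfl⟩, Multiset.sum_cons a T⟩

theorem restrictedSums_map (φ : β →+ γ) (n : ℕ) (M : Multiset β) :
    restrictedSums n (M.map φ) = φ '' restrictedSums n M := by
  ext y
  simp [restrictedSums, Multiset.powersetCard_map, ← map_multiset_sum]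

theorem setOf_sum_injective_eq_restrictedSums (n : ℕ) (S : Finset α) (g : α → β) :
    {y | ∃ x : Fin n → α, (∀ i, x i ∈ S) ∧ Function.Injective x ∧ ∑ i, g (x i) = y} =
      restrictedSums n (S.val.map g) := by
  ext y
  simp only [restrictedSums, Multiset.powersetCard_map, Multiset.mem_map, Set.mem_ofPred_eq]
  constructor
  · rintro ⟨x, hxS, hx, rfl⟩
    refine ⟨_, ⟨(Finset.univ.map ⟨x, hx⟩).val, ?_, rfl⟩, Finset.sum_map _ ⟨x, hx⟩ g⟩
    rw [Multiset.mem_powersetCard]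
    refine ⟨Finset.val_le_iff.mpr fun z hz => ?_, by simp⟩
    obtain ⟨i, -, rfl⟩ := Finset.mem_map.mp hz
    exact hxS i
  · rintro ⟨_, ⟨T, hT, rfl⟩, rfl⟩
    obtain ⟨hTS, hTn⟩ := Multiset.mem_powersetCard.mp hT
    let T' : Finset α := ⟨T, Multiset.nodup_of_le hTS S.nodup⟩
    let e : T' ≃ Fin n := T'.equivFinOfCardEq hTn
    refine ⟨fun i => e.symm i, fun i => Multiset.mem_of_le hTS (e.symm i).2,
      Subtype.val_injective.comp e.symm.injective, ?_⟩
    calc ∑ i, g (e.symm i) = ∑ z : T', g z := e.symm.sum_comp fun z : T' => g z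
      _ = ∑ z ∈ T', g z := Finset.sum_coe_sort T' g

end RestrictedSums

theorem restrictedSums_map_range_eq_Icc {f : ℕ → ℤ} (hf : Monotone f)
    (hstep : ∀ i, f (i + 1) ≤ f i + 1) (n D : ℕ) :
    restrictedSums n ((Multiset.range (D + n)).map f) =
      Set.Icc (∑ i ∈ Finset.range n, f i) (∑ i ∈ Finset.range n, f (D + i)) := by
  induction n generalizing D with
  | zero => simp [restrictedSums_zero]
  | succ n ihn =>
    induction D with
    | zero =>
      simpa [Finset.sum] using restrictedSums_card ((Multiset.range (n + 1)).map f)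
    | succ D ihD =>
      have hlast : (Multiset.range (D + 1 + (n + 1))).map f =
          f (D + 1 + n) ::ₘ (Multiset.range (D + 1 + n)).map f := by
        rw [← add_assoc, Multiset.range_succ, Multiset.map_cons]
      have hcomm : D + (n + 1) = D + 1 + n := by ring
      rw [hcomm] at ihD
      rw [hlast, restrictedSums_succ_cons, ihD, ihn, Set.image_const_add_Icc]
      have hlow : f n ≤ f (D + 1 + n) := hf (by omega)
      have hjump : f (D + 1 + n) ≤ f (D + n) + 1 := by
        simpa only [add_right_comm] using hstep (D + n)
      have hlow_mid : ∑ i ∈ Finset.range n, f i ≤ ∑ i ∈ Finset.range n, f (D + i) :=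
        Finset.sum_le_sum fun i _ => hf (by omega)
      have hmid_top : ∑ i ∈ Finset.range n, f (D + i) ≤ ∑ i ∈ Finset.range n, f (D + 1 + i) :=
        Finset.sum_le_sum fun i _ => hf (by omega)
      have hmono : f (D + n) ≤ f (D + 1 + n) := hf (by omega)
      simp only [Finset.sum_range_succ]
      ext y
      simp only [Set.mem_union, Set.mem_Icc]
      omega

section FloorSums

variable {k s : ℕ}

theorem sum_range_add_div_of_le (hk : 0 < k) (hs : s ≤ k) (D : ℕ) :
    ∑ i ∈ Finset.range s, (D + i) / k = s * (D / k) + (s + D % k - k) := by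
  induction s with
  | zero => simp [(Nat.mod_lt D hk).le]
  | succ s ih =>
    have hmod : D % k < k := Nat.mod_lt D hk
    rw [Finset.sum_range_succ, ih (by omega), Nat.add_div hk, Nat.div_eq_of_lt hs,
      Nat.mod_eq_of_lt hs, Nat.succ_mul]
    split_ifs <;> omega

theorem sum_range_add_div_add_left (hk : 0 < k) (D n : ℕ) :
    ∑ i ∈ Finset.range (k + n), (D + i) / k =
      D + n + ∑ i ∈ Finset.range n, (D + i) / k := by
  have hermite : ∑ i ∈ Finset.range k, (D + i) / k = D := by
    rw [sum_range_add_div_of_le hk le_rfl, Nat.add_sub_cancel_left, Nat.div_add_mod]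
  have hshift (i : ℕ) : (D + (k + i)) / k = (D + i) / k + 1 := by
    rw [add_left_comm, Nat.add_div_left _ hk]
  simp only [Finset.sum_range_add, hermite, hshift, Finset.sum_add_distrib, Finset.sum_const,
    Finset.card_range, smul_eq_mul, mul_one]
  ring

theorem sum_range_add_div (hs : s < k) (t D : ℕ) :
    ∑ i ∈ Finset.range (k * t + s), (D + i) / k =
      ∑ i ∈ Finset.range (k * t + s), i / k + t * D + s * (D / k) + (s + D % k - k) := by
  have hk : 0 < k := by omega
  induction t with
  | zero =>
    have hzero : ∑ i ∈ Finset.range s, i / k = 0 :=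
      Finset.sum_eq_zero fun i hi => Nat.div_eq_of_lt ((Finset.mem_range.mp hi).trans hs)
    simp [hzero, sum_range_add_div_of_le hk hs.le]
  | succ t ih =>
    have hblock : k * (t + 1) + s = k + (k * t + s) := by ring
    have hbase := sum_range_add_div_add_left hk 0 (k * t + s)
    simp only [zero_add] at hbase
    rw [hblock, sum_range_add_div_add_left hk, hbase, ih]
    ring

theorem add_mod_sub_eq_ite (hs : s < k) (D : ℕ) :
    s + D % k - k = if (D + s) % k < s then (D + s) % k else 0 := by
  have hmod : D % k < k := Nat.mod_lt D (by omega)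
  rw [Nat.add_mod, Nat.mod_eq_of_lt hs, Nat.add_mod_eq_ite, Nat.mod_mod, Nat.mod_eq_of_lt hs]
  split_ifs <;> omega

theorem count_map_div_range (hk : 0 < k) (N j : ℕ) :
    ((Multiset.range N).map (· / k)).count j = min N (k * (j + 1)) - k * j := by
  have hfiber : {i ∈ Finset.range N | j = i / k} = Finset.Ico (k * j) (min N (k * (j + 1))) := by
    ext i
    rw [Finset.mem_filter, Finset.mem_range, Finset.mem_Ico, lt_min_iff, eq_comm,
      Nat.div_eq_iff hk, Nat.mul_add_one, mul_comm k j]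
    omega
  rw [Multiset.count_map, ← Finset.range_val, ← Finset.filter_val, hfiber, Finset.card_val,
    Nat.card_Ico]

end FloorSums

section PowerValues

variable {F : Type*} [Semiring F] {k q : ℕ} {R : Set F}

theorem exists_pow_eq_natCast_succ {A : Set F} (hR : R ⊆ {z : F | z ^ k = (q : F) + 1})
    (hA : A = {z : F | ∃ j : ℕ, 1 ≤ j ∧ j ≤ q ∧ z ^ k = (j : F)} ∪ R) :
    ∀ z ∈ A, ∃ j : ℕ, j ≤ q ∧ z ^ k = ((j + 1 : ℕ) : F) := by
  rw [hA]
  rintro z (⟨j, hj, hjq, hz⟩ | hz)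
  · exact ⟨j - 1, by omega, by rw [hz, Nat.sub_add_cancel hj]⟩
  · exact ⟨q, le_rfl, by simpa using hR hz⟩

theorem count_map_pow_le_ncard [CharZero F] {S : Finset F}
    (hS : (S : Set F) = {z : F | ∃ j : ℕ, 1 ≤ j ∧ j ≤ q ∧ z ^ k = (j : F)} ∪ R) :
    (S.val.map (· ^ k)).count ((q + 1 : ℕ) : F) ≤ R.ncard := by
  have hRS : R ⊆ S := hS ▸ Set.subset_union_right
  rw [Multiset.count_map, ← Finset.filter_val, Finset.card_val, ← Set.ncard_coe_finset]
  refine Set.ncard_le_ncard (fun z hz => ?_) (S.finite_toSet.subset hRS)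
  obtain ⟨hzS, hz⟩ := Finset.mem_filter.mp hz
  have hzA : z ∈ (S : Set F) := hzS
  rw [hS] at hzA
  rcases hzA with ⟨j, -, hjq, hj⟩ | hzR
  · have : q + 1 = j := Nat.cast_injective (R := F) (hz.trans hj)
    omega
  · exact hzR

end PowerValues

section PowerFibres

variable {F : Type*} [CommRing F] [IsDomain F] {k q r : ℕ}

theorem finite_setOf_pow_eq (hk : 0 < k) (y : F) : {z : F | z ^ k = y}.Finite :=
  (Polynomial.nthRoots k y).toFinset.finite_toSet.subset fun z hz => by
    simpa [Polynomial.mem_nthRoots hk] using hz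

theorem finite_of_forall_pow_eq_natCast (hk : 0 < k) {A : Set F}
    (hpow : ∀ z ∈ A, ∃ j : ℕ, j ≤ q ∧ z ^ k = ((j + 1 : ℕ) : F)) : A.Finite := by
  have hfin : (⋃ j ∈ Set.Iic q, {z : F | z ^ k = ((j + 1 : ℕ) : F)}).Finite :=
    (Set.finite_Iic q).biUnion fun j _ => finite_setOf_pow_eq hk _
  refine hfin.subset fun z hz => ?_
  obtain ⟨j, hjq, hj⟩ := hpow z hz
  exact Set.mem_biUnion (Set.mem_Iic.mpr hjq) hj

theorem count_map_pow_le (hk : 0 < k) (S : Finset F) (y : F) :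
    (S.val.map (· ^ k)).count y ≤ k := by
  rw [Multiset.count_map, ← Finset.filter_val, Finset.card_val]
  calc ({z ∈ S | y = z ^ k}).card ≤ (Polynomial.nthRoots k y).toFinset.card :=
        Finset.card_le_card fun z hz => by
          simpa [Polynomial.mem_nthRoots hk] using (Finset.mem_filter.mp hz).2.symm
    _ ≤ k := (Multiset.toFinset_card_le _).trans (Polynomial.card_nthRoots k y)

theorem map_pow_eq_map_range [CharZero F] (hr : r < k) {S : Finset F} (hS : S.card = k * q + r)
    (hpow : ∀ z ∈ S, ∃ j : ℕ, j ≤ q ∧ z ^ k = ((j + 1 : ℕ) : F))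
    (htop : (S.val.map (· ^ k)).count ((q + 1 : ℕ) : F) ≤ r) :
    S.val.map (· ^ k) =
      (Multiset.range (k * q + r)).map fun i => ((i / k + 1 : ℕ) : F) := by
  have hk : 0 < k := by omega
  refine Multiset.eq_of_le_of_card_le (Multiset.le_iff_count.mpr fun y => ?_) (by simp [hS])
  by_cases hy : y ∈ S.val.map (· ^ k)
  · obtain ⟨z, hz, rfl⟩ := Multiset.mem_map.mp hy
    obtain ⟨j, hjq, hj⟩ := hpow z hz
    have hcount : ((Multiset.range (k * q + r)).map fun i => ((i / k + 1 : ℕ) : F)).count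
        ((j + 1 : ℕ) : F) = min (k * q + r) (k * (j + 1)) - k * j := by
      rw [← count_map_div_range hk, ← Multiset.count_map_eq_count' (fun i => ((i + 1 : ℕ) : F)) _
        (Nat.cast_injective.comp (add_left_injective 1)), Multiset.map_map]
      rfl
    simp only [hj, hcount]
    rcases hjq.eq_or_lt with rfl | hlt
    · rwa [Nat.mul_add_one, min_eq_left (by omega), Nat.add_sub_cancel_left]
    · have hle : k * (j + 1) ≤ k * q := Nat.mul_le_mul_left k hlt
      rw [min_eq_right (by omega), Nat.mul_add_one, Nat.add_sub_cancel_left]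
      exact count_map_pow_le hk S _
  · rw [Multiset.count_eq_zero_of_notMem hy]
    exact Nat.zero_le _

theorem restrictedSums_map_pow [CharZero F] (hr : r < k) {S : Finset F}
    (hS : S.card = k * q + r) (hpow : ∀ z ∈ S, ∃ j : ℕ, j ≤ q ∧ z ^ k = ((j + 1 : ℕ) : F))
    (htop : (S.val.map (· ^ k)).count ((q + 1 : ℕ) : F) ≤ r) {n D : ℕ} (hD : S.card = D + n) :
    restrictedSums n (S.val.map (· ^ k)) = Int.cast ''
      Set.Icc (∑ i ∈ Finset.range n, ((i / k + 1 : ℕ) : ℤ))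
        (∑ i ∈ Finset.range n, (((D + i) / k + 1 : ℕ) : ℤ)) := by
  have hk : 0 < k := by omega
  have hmono : Monotone fun i => ((i / k + 1 : ℕ) : ℤ) := fun _ _ hab =>
    Nat.cast_le.mpr (Nat.succ_le_succ (Nat.div_le_div_right hab))
  have hstep (i : ℕ) : (((i + 1) / k + 1 : ℕ) : ℤ) ≤ ((i / k + 1 : ℕ) : ℤ) + 1 := by
    have : (i + 1) / k ≤ (i + k) / k := Nat.div_le_div_right (by omega)
    rw [Nat.add_div_right i hk] at this
    omega
  have hcast : S.val.map (· ^ k) = ((Multiset.range (D + n)).map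
      fun i => ((i / k + 1 : ℕ) : ℤ)).map (Int.castAddHom F) := by
    rw [map_pow_eq_map_range hr hS hpow htop, ← hS, hD, Multiset.map_map]
    exact Multiset.map_congr rfl fun i _ => (Int.cast_natCast _).symm
  rw [hcast, restrictedSums_map, restrictedSums_map_range_eq_Icc hmono hstep, Int.coe_castAddHom]

end PowerFibres

theorem ncard_Icc_sum_div {k n q r s D : ℕ} (hr : r < k) (hs : s < k)
    (hn : n = k * (n / k) + s) (hD : k * q + r = D + n) :
    (Set.Icc (∑ i ∈ Finset.range n, ((i / k + 1 : ℕ) : ℤ))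
      (∑ i ∈ Finset.range n, (((D + i) / k + 1 : ℕ) : ℤ))).ncard =
      1 + n / k * D + s * (D / k) + if r < s then r else 0 := by
  have hr_mod : (D + s) % k = r := by
    calc (D + s) % k = (D + n) % k := by
          rw [hn, ← add_assoc, add_right_comm, Nat.add_mul_mod_self_left]
      _ = r := by rw [← hD, Nat.mul_add_mod, Nat.mod_eq_of_lt hr]
  have hsum := sum_range_add_div hs (n / k) D
  rw [← hn, add_mod_sub_eq_ite hs, hr_mod] at hsum
  simp only [← Nat.cast_sum, Finset.sum_add_distrib, hsum]
  rw [← Finset.coe_Icc, Set.ncard_coe_finset, Int.card_Icc]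
  omega

theorem stmt12_general {F : Type*} [CommRing F] [IsDomain F] [CharZero F] (k n q r : ℕ)
    (hr : r < k) (R : Set F) (hRsub : R ⊆ {z : F | z ^ k = (q : F) + 1}) (hRcard : R.ncard = r)
    (A : Set F)
    (hA : A = {z : F | ∃ j : ℕ, 1 ≤ j ∧ j ≤ q ∧ z ^ k = (j : F)} ∪ R)
    (hAcard : A.ncard = k * q + r) (hAn : n ≤ k * q + r)
    (s : ℕ) (hs : s < k) (hns : n = k * (n / k) + s)
    (V : Set F)
    (hV : V = {y : F | ∃ x : Fin n → F, (∀ i, x i ∈ A) ∧ Function.Injective x ∧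
      ∑ i, (x i) ^ k = y}) :
    (∃ m M : ℤ, V = {z : F | ∃ t : ℤ, m ≤ t ∧ t ≤ M ∧ z = (t : F)}) ∧
    V.ncard = 1 + (n / k) * (A.ncard - n) + s * ((A.ncard - n) / k)
        + (if r < s then r else 0) := by
  have hpow := exists_pow_eq_natCast_succ hRsub hA
  obtain ⟨S, rfl⟩ := (finite_of_forall_pow_eq_natCast (by omega) hpow).exists_finset_coe
  rw [Set.ncard_coe_finset] at hAcard ⊢
  obtain ⟨D, hD⟩ := Nat.exists_eq_add_of_le' (hAn.trans_eq hAcard.symm)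
  have hVcast := hV.trans ((setOf_sum_injective_eq_restrictedSums n S (· ^ k)).trans
    (restrictedSums_map_pow hr hAcard hpow (hRcard ▸ count_map_pow_le_ncard hA) hD))
  constructor
  · refine ⟨∑ i ∈ Finset.range n, ((i / k + 1 : ℕ) : ℤ),
      ∑ i ∈ Finset.range n, (((D + i) / k + 1 : ℕ) : ℤ), hVcast.trans ?_⟩
    ext z
    simp only [Set.mem_image, Set.mem_Icc, Set.mem_ofPred_eq, and_assoc, eq_comm]
  · rw [hVcast, Set.ncard_image_of_injective _ Int.cast_injective,
      ncard_Icc_sum_div hr hs hns (hAcard.symm.trans hD), hD, Nat.add_sub_cancel_right]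

theorem stmt12 (k n q : ℕ) (hk : 0 < k) (hn : 0 < n) (hnk : k ≤ n)
    (r : ℕ) (hr : r < k)
    (R : Set ℂ) (hRfin : R.Finite) (hRsub : R ⊆ {z : ℂ | z ^ k = (q : ℂ) + 1})
    (hRcard : R.ncard = r)
    (A : Set ℂ)
    (hA : A = {z : ℂ | ∃ j : ℕ, 1 ≤ j ∧ j ≤ q ∧ z ^ k = (j : ℂ)} ∪ R)
    (hAcard : A.ncard = k * q + r) (hAn : n ≤ k * q + r)
    (s : ℕ) (hs : s < k) (hns : n = k * (n / k) + s)
    (V : Set ℂ)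
    (hV : V = {y : ℂ | ∃ x : Fin n → ℂ, (∀ i, x i ∈ A) ∧ Function.Injective x ∧
      ∑ i, (x i) ^ k = y}) :
    (∃ m M : ℤ, V = {z : ℂ | ∃ t : ℤ, m ≤ t ∧ t ≤ M ∧ z = (t : ℂ)}) ∧
    V.ncard = 1 + (n / k) * (A.ncard - n) + s * ((A.ncard - n) / k)
        + (if r < s then r else 0) :=
  stmt12_general k n q r hr R hRsub hRcard A hA hAcard hAn s hs hns V hV
end
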